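/- arXiv:2109.08278 — 4 statements merged into one kernel-verified Lean document; each statement's English description precedes it below -/
import Mathlib

section
/- Let s and t be terms (or equal-length tuples of terms) with Var(s) ∩ Var(t) = ∅ and t linear, and let S be a set of variables with S ∩ Var(t) = ∅. If s and t are unifiable, then there exists a relevant and idempotent most general unifier θ of s ≐ t such that the restriction θ|Var(s) is linear for S and Ran(θ|Var(s)) ⊆ Var(t). -/
/-- Finite first-order terms: variables and function applications.
A function symbol is identified by its name together with the number of
arguments it is applied to (fixed arity). -/
inductive Trm : Type where
  | var : ℕ → Trm
  | fn  : ℕ → List Trm → Trm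

namespace Trm

/-- `|t|`: the number of occurrences of variables and function symbols
(including constants) in the term `t`. -/
def size : Trm → ℕ
  | .var _ => 1
  | .fn _ ts => 1 + (ts.attach.map (fun ⟨t, _⟩ => size t)).sum
decreasing_by
  have := List.sizeOf_lt_of_mem ‹_ ∈ ts›
  simp [Trm.fn.sizeOf_spec]; omega

/-- Application of a substitution (a map from variables to terms) to a term. -/
def subst (σ : ℕ → Trm) : Trm → Trm
  | .var x => σ x
  | .fn f ts => .fn f (ts.attach.map (fun ⟨t, _⟩ => subst σ t))
decreasing_by
  have := List.sizeOf_lt_of_mem ‹_ ∈ ts›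
  simp [Trm.fn.sizeOf_spec]; omega

/-- The number of occurrences of the variable `x` in a term. -/
def count (x : ℕ) : Trm → ℕ
  | .var y => if y = x then 1 else 0
  | .fn _ ts => (ts.attach.map (fun ⟨t, _⟩ => count x t)).sum
decreasing_by
  have := List.sizeOf_lt_of_mem ‹_ ∈ ts›
  simp [Trm.fn.sizeOf_spec]; omega

/-- `Occurs x t` : the variable `x` occurs in the term `t`. -/
inductive Occurs (x : ℕ) : Trm → Prop where
  | var : Occurs x (.var x)
  | fn {f : ℕ} {ts : List Trm} {t : Trm} : t ∈ ts → Occurs x t → Occurs x (.fn f ts)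

end Trm

/-- The set of variables occurring in a term. -/
def varSet (t : Trm) : Set ℕ := {x | Trm.Occurs x t}

/-- The set of variables occurring in a list (tuple) of terms. -/
def varsL (l : List Trm) : Set ℕ := {x | ∃ t ∈ l, Trm.Occurs x t}

/-- The number of occurrences of a variable in a list (tuple) of terms. -/
def countL (x : ℕ) (l : List Trm) : ℕ := (l.map (Trm.count x)).sum

/-- A term is ground if no variable occurs in it. -/
def Ground (t : Trm) : Prop := ∀ x, ¬ Trm.Occurs x t

/-- An equation set: a set of equations `s ≐ t` between terms,
represented as pairs of terms. -/
abbrev EqSet := Set (Trm × Trm)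

/-- `σ` is a solution (unifier) of the equation set `E`. -/
def Solves (σ : ℕ → Trm) (E : EqSet) : Prop :=
  ∀ e ∈ E, Trm.subst σ e.1 = Trm.subst σ e.2

/-- `E` is unifiable: it has a unifier. -/
def Unifiable (E : EqSet) : Prop := ∃ σ, Solves σ E

/-- `θ` is a most general unifier of `E`. -/
def IsMgu (θ : ℕ → Trm) (E : EqSet) : Prop :=
  Solves θ E ∧ ∀ σ, Solves σ E → ∃ ρ, ∀ x, σ x = Trm.subst ρ (θ x)

/-- The equation set `s ≐̈ t` pairing corresponding members of two
equal-length tuples of terms. -/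
def zipEqs (s t : List Trm) : EqSet := {e | e ∈ s.zip t}

/-- `Dom(θ) = {X | Xθ ≠ X}`. -/
def Dom (θ : ℕ → Trm) : Set ℕ := {x | θ x ≠ .var x}

/-- `Ran(θ) = ⋃_{X ∈ Dom(θ)} Var(Xθ)`. -/
def Ran (θ : ℕ → Trm) : Set ℕ := {x | ∃ y ∈ Dom θ, Trm.Occurs x (θ y)}

/-- `θ` is idempotent: `(uθ)θ = uθ` for every term `u`. -/
def Idempotent (θ : ℕ → Trm) : Prop :=
  ∀ u : Trm, Trm.subst θ (Trm.subst θ u) = Trm.subst θ u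

/- The restriction `θ|S` of a substitution to a set of variables:
`X(θ|S) = Xθ` for `X ∈ S` and `X(θ|S) = X` otherwise. -/
open Classical in
noncomputable def restrict (θ : ℕ → Trm) (S : Set ℕ) : ℕ → Trm :=
  fun x => if x ∈ S then θ x else .var x

/-- A pair of terms is linear: no variable occurs more than once in it. -/
def LinearPair (u v : Trm) : Prop := ∀ x, Trm.count x u + Trm.count x v ≤ 1

/-- A tuple of terms is linear: no variable occurs more than once in it. -/
def LinearL (l : List Trm) : Prop := ∀ x, countL x l ≤ 1

/-- `θ` is linear for a set of variables `S` if for any two distinct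
variables `X, Y ∈ S` the pair `(Xθ, Yθ)` is linear. -/
def LinearFor (θ : ℕ → Trm) (S : Set ℕ) : Prop :=
  ∀ X ∈ S, ∀ Y ∈ S, X ≠ Y → LinearPair (θ X) (θ Y)

namespace Trm

theorem subst_fn (σ : ℕ → Trm) (f : ℕ) (ts : List Trm) :
    subst σ (.fn f ts) = .fn f (ts.map (subst σ)) := by
  rw [subst]; simp

theorem subst_var (σ : ℕ → Trm) (x : ℕ) : subst σ (.var x) = σ x := by
  rw [subst]

theorem count_fn (x : ℕ) (f : ℕ) (ts : List Trm) :
    count x (.fn f ts) = countL x ts := by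
  rw [count, countL]; simp

theorem count_var (x y : ℕ) : count x (.var y) = if y = x then 1 else 0 := by
  rw [count]

theorem size_fn (f : ℕ) (ts : List Trm) :
    size (.fn f ts) = 1 + (ts.map size).sum := by
  rw [size]; simp

theorem size_var (x : ℕ) : size (.var x) = 1 := by
  rw [size]

theorem size_pos (t : Trm) : 0 < size t := by
  cases t with
  | var x => rw [size_var]; omega
  | fn f ts => rw [size_fn]; omega

theorem ind {P : Trm → Prop} (hv : ∀ x, P (.var x))
    (hf : ∀ f ts, (∀ t ∈ ts, P t) → P (.fn f ts)) : ∀ t, P t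
  | .var x => hv x
  | .fn f ts => hf f ts (fun t ht => ind hv hf t)
decreasing_by
  have := List.sizeOf_lt_of_mem ht
  simp [Trm.fn.sizeOf_spec]; omega

theorem countL_nil (x : ℕ) : countL x [] = 0 := by simp [countL]

theorem countL_cons (x : ℕ) (a : Trm) (l : List Trm) :
    countL x (a :: l) = count x a + countL x l := by simp [countL]

theorem countL_pos {x : ℕ} {l : List Trm} : 0 < countL x l ↔ ∃ t ∈ l, 0 < count x t := by
  induction l with
  | nil => simp [countL_nil]
  | cons a l ih =>
    rw [countL_cons]
    simp only [List.mem_cons, exists_eq_or_imp, ← ih]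
    omega

theorem occurs_iff (x : ℕ) : ∀ t, Occurs x t ↔ 0 < count x t := by
  apply ind
  · intro y
    rw [count_var]
    constructor
    · intro h; cases h; simp
    · intro h
      by_cases e : y = x
      · subst e; exact .var
      · simp [e] at h
  · intro f ts ih
    rw [count_fn, countL_pos]
    constructor
    · intro h
      cases h with
      | fn h1 h2 => exact ⟨_, h1, (ih _ h1).1 h2⟩
    · rintro ⟨t, h1, h2⟩
      exact .fn h1 ((ih _ h1).2 h2)

theorem subst_congr (σ τ : ℕ → Trm) :
    ∀ t, (∀ x, 0 < count x t → σ x = τ x) → subst σ t = subst τ t := by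
  apply ind
  · intro y h
    rw [subst_var, subst_var]; apply h; simp [count_var]
  · intro f ts ih h
    rw [subst_fn, subst_fn]
    congr 1
    apply List.map_congr_left
    intro t ht
    apply ih t ht
    intro x hx
    apply h
    rw [count_fn, countL_pos]
    exact ⟨t, ht, hx⟩

theorem subst_id : ∀ t, subst (fun x => .var x) t = t := by
  apply ind
  · intro y; rw [subst_var]
  · intro f ts ih
    rw [subst_fn]
    congr 1
    conv_rhs => rw [← List.map_id ts]
    apply List.map_congr_left
    intro t ht
    exact ih t ht

theorem subst_self (σ : ℕ → Trm) (t : Trm) (h : ∀ x, 0 < count x t → σ x = .var x) :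
    subst σ t = t := by
  rw [subst_congr σ _ t h, subst_id]

theorem subst_subst (σ τ : ℕ → Trm) :
    ∀ t, subst σ (subst τ t) = subst (fun x => subst σ (τ x)) t := by
  apply ind
  · intro y; simp only [subst_var]
  · intro f ts ih
    simp only [subst_fn, List.map_map]
    congr 1
    apply List.map_congr_left
    intro t ht
    exact ih t ht

theorem count_subst (σ : ℕ → Trm) (y : ℕ) :
    ∀ t, 0 < count y (subst σ t) → ∃ x, 0 < count x t ∧ 0 < count y (σ x) := by
  apply ind
  · intro z h; rw [subst_var] at h
    exact ⟨z, by simp [count_var], h⟩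
  · intro f ts ih h
    rw [subst_fn, count_fn, countL_pos] at h
    obtain ⟨t', ht', h⟩ := h
    obtain ⟨t, ht, rfl⟩ := List.mem_map.1 ht'
    obtain ⟨x, h1, h2⟩ := ih t ht h
    refine ⟨x, ?_, h2⟩
    rw [count_fn, countL_pos]
    exact ⟨t, ht, h1⟩

/-- linear-linear unification of a term -/
def LP (a : Trm) : Prop :=
  ∀ b, (∀ x, count x a + count x b ≤ 1) → (∃ σ, subst σ a = subst σ b) →
    ∃ μ : ℕ → Trm, subst μ a = subst μ b ∧
      (∀ σ, subst σ a = subst σ b → ∀ x, σ x = subst σ (μ x)) ∧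
      (∀ x, count x a + count x b = 0 → μ x = .var x) ∧
      (∀ x y, 0 < count y (μ x) → y = x ∨ 0 < count y a + count y b) ∧
      (∀ x, count x (subst μ a) ≤ count x a + count x b) ∧
      (∀ X, a = .var X → subst μ a = b)

theorem LPlist (as : List Trm) (h : ∀ a ∈ as, LP a) :
  ∀ bs : List Trm, (∀ x, countL x as + countL x bs ≤ 1) →
    (∃ σ, as.map (subst σ) = bs.map (subst σ)) →
    ∃ μ : ℕ → Trm, as.map (subst μ) = bs.map (subst μ) ∧
      (∀ σ, as.map (subst σ) = bs.map (subst σ) → ∀ x, σ x = subst σ (μ x)) ∧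
      (∀ x, countL x as + countL x bs = 0 → μ x = .var x) ∧
      (∀ x y, 0 < count y (μ x) → y = x ∨ 0 < countL y as + countL y bs) ∧
      (∀ x, countL x (as.map (subst μ)) ≤ countL x as + countL x bs) := by
  induction as with
  | nil =>
    intro bs hl hu
    obtain ⟨σ, hσ⟩ := hu
    cases bs with
    | cons b bs => simp at hσ
    | nil =>
      refine ⟨fun x => .var x, rfl, ?_, ?_, ?_, ?_⟩
      · intro σ _ x; rw [subst_var]
      · intro x _; rfl
      · intro x y hy; left; rw [count_var] at hy; by_contra hne
        rw [if_neg (fun e => hne e.symm)] at hy; omega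
      · intro x; simp [countL_nil]
  | cons a as ih =>
    intro bs hl hu
    obtain ⟨σ₀, hσ₀⟩ := hu
    cases bs with
    | nil => simp at hσ₀
    | cons b bs =>
      simp only [List.map_cons, List.cons.injEq] at hσ₀ ⊢
      simp only [countL_cons] at hl ⊢
      obtain ⟨m1, p1, p2, p3, p4, p5, -⟩ := h a (by simp) b (fun x => by have := hl x; omega)
        ⟨σ₀, hσ₀.1⟩
      obtain ⟨m2, q1, q2, q3, q4, q5⟩ := ih (fun a ha => h a (by simp [ha])) bs
        (fun x => by have := hl x; omega) ⟨σ₀, hσ₀.2⟩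
      classical
      set μ : ℕ → Trm := fun x => if 0 < count x a + count x b then m1 x else m2 x with hμ
      have ea : ∀ c, (∀ x, 0 < count x c → 0 < count x a + count x b) →
          subst μ c = subst m1 c := by
        intro c hc
        apply subst_congr
        intro x hx
        simp only [hμ]; rw [if_pos (hc x hx)]
      have el : ∀ cs : List Trm, (∀ x, 0 < countL x cs → 0 < countL x as + countL x bs) →
          cs.map (subst μ) = cs.map (subst m2) := by
        intro cs hc
        apply List.map_congr_left
        intro t ht
        apply subst_congr
        intro x hx
        have := hc x (countL_pos.2 ⟨t, ht, hx⟩)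
        have := hl x
        simp only [hμ]; rw [if_neg (by omega)]
      have e1 := ea a (fun x hx => by omega)
      have e2 := ea b (fun x hx => by omega)
      have e3 := el as (fun x hx => by omega)
      have e4 := el bs (fun x hx => by omega)
      refine ⟨μ, ⟨by rw [e1, e2, p1], by rw [e3, e4, q1]⟩, ?_, ?_, ?_, ?_⟩
      · rintro σ ⟨h1, h2⟩ x
        simp only [hμ]
        split_ifs
        · exact p2 σ h1 x
        · exact q2 σ h2 x
      · intro x hx
        simp only [hμ]
        rw [if_neg (by omega)]
        exact q3 x (by omega)
      · intro x y hy
        simp only [hμ] at hy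
        split_ifs at hy
        · have := p4 x y hy; omega
        · have := q4 x y hy; omega
      · intro x
        rw [e1, e3]
        have := p5 x; have := q5 x; omega

theorem count_single (A : ℕ) (w : Trm) (x y : ℕ)
    (h : 0 < count y (if x = A then w else .var x)) : y = x ∨ 0 < count y w := by
  split_ifs at h
  · exact Or.inr h
  · rw [count_var] at h
    split_ifs at h with e
    · exact Or.inl e.symm
    · omega

theorem LP_all : ∀ a, LP a := by
  apply ind
  · intro X b hl hu
    have hb : count X b = 0 := by have := hl X; rw [count_var, if_pos rfl] at this; omega
    have hbb : subst (fun x => if x = X then b else .var x) b = b := by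
      apply subst_self
      intro x hx
      rw [if_neg]; rintro rfl; omega
    refine ⟨fun x => if x = X then b else .var x, ?_, ?_, ?_, ?_, ?_, ?_⟩
    · rw [hbb, subst_var, if_pos rfl]
    · intro σ hσ x
      rw [subst_var] at hσ
      dsimp only
      split_ifs with e
      · rw [e, hσ]
      · rw [subst_var]
    · intro x hx
      dsimp only
      rw [if_neg]; rintro rfl; rw [count_var, if_pos rfl] at hx; omega
    · intro x y hy
      have := count_single _ _ _ _ hy; omega
    · intro x; rw [subst_var, if_pos rfl]; omega
    · intro Y hY
      rw [subst_var, if_pos rfl]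
  · intro f ts ih b hl hu
    cases b with
    | var A =>
      have hb : count A (.fn f ts) = 0 := by
        have := hl A; rw [count_var, if_pos rfl] at this; omega
      have hbb : subst (fun x => if x = A then (.fn f ts) else .var x) (.fn f ts) = .fn f ts := by
        apply subst_self
        intro x hx
        rw [if_neg]; rintro rfl; omega
      refine ⟨fun x => if x = A then (.fn f ts) else .var x, ?_, ?_, ?_, ?_, ?_, ?_⟩
      · rw [hbb, subst_var, if_pos rfl]
      · intro σ hσ x
        rw [subst_var] at hσ
        dsimp only
        split_ifs with e
        · rw [e, hσ]
        · rw [subst_var]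
      · intro x hx
        dsimp only
        rw [if_neg]; rintro rfl; rw [count_var x x, if_pos rfl] at hx; omega
      · intro x y hy
        have := count_single _ _ _ _ hy; omega
      · intro x; rw [hbb]; omega
      · intro Y hY; cases hY
    | fn g us =>
      have key : ∀ σ, subst σ (.fn f ts) = subst σ (.fn g us) ↔
          f = g ∧ ts.map (subst σ) = us.map (subst σ) := by
        intro σ; rw [subst_fn, subst_fn, Trm.fn.injEq]
      simp only [key, count_fn] at hl hu ⊢
      obtain ⟨σ, hfg, hσ⟩ := hu
      obtain ⟨μ, h1, h2, h3, h4, h5⟩ := LPlist ts ih us hl ⟨σ, hσ⟩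
      refine ⟨μ, ⟨hfg, h1⟩, fun σ h => h2 σ h.2, h3, h4, ?_, ?_⟩
      · intro x; rw [subst_fn, count_fn]; exact h5 x
      · intro X h; cases h

/-- occurrences in left-hand / right-hand sides -/
def ca (x : ℕ) (l : List (Trm × Trm)) : ℕ := countL x (l.map Prod.fst)
def cb (x : ℕ) (l : List (Trm × Trm)) : ℕ := countL x (l.map Prod.snd)

theorem ca_cons (x : ℕ) (a b : Trm) (l : List (Trm × Trm)) :
    ca x ((a, b) :: l) = count x a + ca x l := by simp [ca, countL_cons]
theorem cb_cons (x : ℕ) (a b : Trm) (l : List (Trm × Trm)) :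
    cb x ((a, b) :: l) = count x b + cb x l := by simp [cb, countL_cons]

theorem ca_zip (x : ℕ) (s t : List Trm) (h : s.length = t.length) (l : List (Trm × Trm)) :
    ca x (s.zip t ++ l) = countL x s + ca x l := by
  simp [ca, List.map_fst_zip h.le, countL]
theorem cb_zip (x : ℕ) (s t : List Trm) (h : s.length = t.length) (l : List (Trm × Trm)) :
    cb x (s.zip t ++ l) = countL x t + cb x l := by
  simp [cb, List.map_snd_zip h.ge, countL]

def Sol (σ : ℕ → Trm) (l : List (Trm × Trm)) : Prop :=
  ∀ e ∈ l, subst σ e.1 = subst σ e.2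

theorem Sol_cons (σ : ℕ → Trm) (a b : Trm) (l : List (Trm × Trm)) :
    Sol σ ((a, b) :: l) ↔ subst σ a = subst σ b ∧ Sol σ l := by simp [Sol]

theorem Sol_zip (σ : ℕ → Trm) (l : List (Trm × Trm)) : ∀ (s t : List Trm),
    s.length = t.length →
    (Sol σ (s.zip t ++ l) ↔ s.map (subst σ) = t.map (subst σ) ∧ Sol σ l)
  | [], [], _ => by simp
  | [], _ :: _, h => by simp at h
  | _ :: _, [], h => by simp at h
  | a :: s, b :: t, h => by
    have := Sol_zip σ l s t (by simpa using h)
    simp only [List.zip_cons_cons, List.cons_append, Sol_cons, this, List.map_cons,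
      List.cons.injEq, and_assoc]

theorem Sol_congr {σ τ : ℕ → Trm} {l : List (Trm × Trm)}
    (h : ∀ x, 0 < ca x l + cb x l → σ x = τ x) (hs : Sol τ l) : Sol σ l := by
  intro e he
  rw [subst_congr σ τ e.1, subst_congr σ τ e.2, hs e he]
  · intro x hx
    apply h
    have : 0 < cb x l := countL_pos.2 ⟨e.2, List.mem_map_of_mem he, hx⟩
    omega
  · intro x hx
    apply h
    have : 0 < ca x l := countL_pos.2 ⟨e.1, List.mem_map_of_mem he, hx⟩
    omega

def Good (θ : ℕ → Trm) (l : List (Trm × Trm)) : Prop :=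
  Sol θ l ∧ (∀ σ, Sol σ l → ∀ x, σ x = subst σ (θ x)) ∧
  (∀ x, ca x l + cb x l = 0 → θ x = .var x) ∧
  (∀ x y, 0 < count y (θ x) → y = x ∨ 0 < ca y l + cb y l) ∧
  (∀ X, cb X l = 0 → θ X = .var X ∨ ∀ y, count y (θ X) ≤ cb y l) ∧
  (∀ X Y, X ≠ Y → cb X l = 0 → cb Y l = 0 → ∀ z, 0 < cb z l →
    0 < count z (θ X) → 0 < count z (θ Y) → False)

theorem main : ∀ (n : ℕ) (l : List (Trm × Trm)), (l.map (fun e => size e.2)).sum ≤ n →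
    (∀ x, ca x l = 0 ∨ cb x l = 0) → (∀ x, cb x l ≤ 1) → (∃ σ, Sol σ l) → ∃ θ, Good θ l := by
  intro n
  induction n with
  | zero =>
    intro l hn _ _ _
    cases l with
    | cons e l =>
      have := size_pos e.2
      simp at hn; omega
    | nil =>
      refine ⟨fun x => .var x, by simp [Sol], ?_, ?_, ?_, ?_, ?_⟩
      · intro σ _ x; rw [subst_var]
      · intro x _; rfl
      · intro x y hy
        have := count_single x (.var x) x y (by simpa using hy)
        left
        simpa using count_single x (.var y) x y (by simpa [count_var] using hy) |>.elim id
          (fun _ => by rw [count_var] at hy; split_ifs at hy with e; exact e.symm; omega)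
      · intro X _; left; rfl
      · intro X Y _ _ _ z hz; simp [cb, countL_nil] at hz
  | succ n IH =>
    intro l hn hd hlin hu
    cases l with
    | nil => exact IH [] (by simp) hd hlin hu
    | cons e l =>
      obtain ⟨a, b⟩ := e
      have hsb := size_pos b
      simp only [List.map_cons, List.sum_cons] at hn
      simp only [ca_cons, cb_cons] at hd hlin
      obtain ⟨σ₀, hσ₀⟩ := hu
      rw [Sol_cons] at hσ₀
      obtain ⟨hσa, hσl⟩ := hσ₀
      have getθ : ∃ θ, Good θ l := IH l (by omega) (fun x => by have := hd x; omega)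
        (fun x => by have := hlin x; omega) ⟨σ₀, hσl⟩
      cases a with
      | var X =>
        obtain ⟨θ', g1, g2, g3, g4, g5, g6⟩ := getθ
        have hXb : count X b = 0 ∧ cb X l = 0 := by
          have := hd X; rw [count_var, if_pos rfl] at this; omega
        have hbθ : subst θ' b = b := by
          apply subst_self
          intro x hx
          apply g3
          have := hd x; have := hlin x; omega
        obtain ⟨μ, m1, m2, m3, m4, m5, m6⟩ := LP_all (θ' X) b (by
          intro x
          rcases g5 X hXb.2 with e | e
          · rw [e, count_var]
            have := hlin x
            split_ifs with e
            · subst e; omega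
            · omega
          · have := e x; have := hlin x; omega) ⟨σ₀, by
            rw [← g2 σ₀ hσl X, ← hσa, subst_var]⟩
        -- other variables are untouched
        have hY : ∀ Y, Y ≠ X → count Y b + cb Y l = 0 → subst μ (θ' Y) = θ' Y := by
          intro Y hne hYb
          apply subst_self
          intro z hz
          apply m3
          have hzY : z = Y ∨ 0 < cb z l := by
            rcases g5 Y (by omega) with e | e
            · rw [e, count_var] at hz
              split_ifs at hz with e
              · exact Or.inl e.symm
              · omega
            · right; have := e z; omega
          have hzb : count z b = 0 := by
            rcases hzY with e | e
            · subst e; omega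
            · have := hlin z; omega
          have hzX : ¬ 0 < count z (θ' X) := by
            intro hzX
            rcases hzY with e | e
            · subst e
              rcases g5 X hXb.2 with e | e
              · rw [e, count_var, if_neg (fun h => hne h.symm)] at hzX; omega
              · have := e z; omega
            · exact g6 X Y hne.symm hXb.2 (by omega) z e hzX hz
          omega
        have hX : ∀ y, count y (subst μ (θ' X)) ≤ count y b + cb y l := by
          intro y
          rcases g5 X hXb.2 with e | e
          · rw [m6 X e]; omega
          · have := m5 y; have := e y; omega
        have hXY : ∀ Y, Y ≠ X → count Y b + cb Y l = 0 → ∀ z, 0 < count z b + cb z l →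
            0 < count z (subst μ (θ' X)) → 0 < count z (θ' Y) → False := by
          intro Y hne hYb z hz h1 h2
          have hzl : 0 < cb z l := by
            rcases g5 Y (by omega) with e | e
            · rw [e, count_var] at h2
              split_ifs at h2 with e
              · subst e; omega
              · omega
            · have := e z; omega
          have hzb : count z b = 0 := by have := hlin z; omega
          rcases g5 X hXb.2 with e | e
          · rw [m6 X e] at h1; omega
          · have := m5 z
            exact g6 X Y hne.symm hXb.2 (by omega) z hzl (by omega) h2
        refine ⟨fun x => subst μ (θ' x), ?_, ?_, ?_, ?_, ?_, ?_⟩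
        · rw [Sol_cons]
          refine ⟨?_, ?_⟩
          · rw [subst_var, ← subst_subst, hbθ, m1]
          · intro e he
            rw [← subst_subst, ← subst_subst, g1 e he]
        · intro σ hσ x
          rw [Sol_cons] at hσ
          have hm := m2 σ (by rw [← g2 σ hσ.2 X, ← hσ.1, subst_var])
          rw [subst_subst, g2 σ hσ.2 x]
          apply subst_congr
          intro z _
          exact hm z
        · intro x hx
          simp only [ca_cons, cb_cons, count_var] at hx
          have hne : x ≠ X := by rintro rfl; simp at hx
          dsimp only
          rw [hY x hne (by omega), g3 x (by omega)]
        · intro x y hy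
          simp only [ca_cons, cb_cons]
          obtain ⟨z, hz1, hz2⟩ := count_subst _ _ _ hy
          rcases m4 z y hz2 with e | e
          · subst e
            rcases g4 x y hz1 with e | e
            · left; exact e
            · right; omega
          · by_cases hb : 0 < count y b
            · right; omega
            · rcases g4 X y (by omega) with e | e
              · right; rw [count_var, if_pos e.symm]; omega
              · right; omega
        · intro Y hYb
          simp only [cb_cons] at hYb ⊢
          by_cases hne : Y = X
          · subst hne; right; exact hX
          · rw [hY Y hne hYb]
            rcases g5 Y (by omega) with e | e
            · left; exact e
            · right; intro y; have := e y; omega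
        · intro Y Z hYZ hYb hZb z hz h1 h2
          simp only [cb_cons] at hYb hZb hz
          dsimp only at h1 h2
          by_cases h3 : Y = X
          · subst h3
            rw [hY Z hYZ.symm hZb] at h2
            exact hXY Z hYZ.symm hZb z hz h1 h2
          · rw [hY Y h3 hYb] at h1
            by_cases h4 : Z = X
            · subst h4
              exact hXY Y h3 hYb z hz h2 h1
            · rw [hY Z h4 hZb] at h2
              have hzl : 0 < cb z l := by
                rcases g5 Y (by omega) with e | e
                · rw [e, count_var] at h1
                  split_ifs at h1 with e
                  · subst e; omega
                  · omega
                · have := e z; omega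
              exact g6 Y Z hYZ (by omega) (by omega) z hzl h1 h2
      | fn f as =>
        cases b with
        | var A =>
          obtain ⟨θ', g1, g2, g3, g4, g5, g6⟩ := getθ
          have hA : count A (.fn f as) = 0 ∧ ca A l = 0 ∧ cb A l = 0 := by
            have h1 := hd A; have h2 := hlin A
            rw [count_var, if_pos rfl] at h1 h2; omega
          generalize Trm.fn f as = w at *
          set θ : ℕ → Trm := fun x => if x = A then subst θ' w else θ' x with hθ
          have hne : ∀ x, x ≠ A → θ x = θ' x := fun x hx => by simp only [hθ]; rw [if_neg hx]
          have hAA : θ A = subst θ' w := by simp [hθ]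
          have hcv : ∀ x, x ≠ A → count x (.var A) = 0 := fun x hx => by
            rw [count_var, if_neg (fun e => hx e.symm)]
          have hcA : count A (.var A) = 1 := by rw [count_var, if_pos rfl]
          refine ⟨θ, ?_, ?_, ?_, ?_, ?_, ?_⟩
          · rw [Sol_cons]
            refine ⟨?_, Sol_congr ?_ g1⟩
            · rw [subst_var, hAA]
              apply subst_congr
              intro x hx
              apply hne; rintro rfl; omega
            · intro x hx
              apply hne; rintro rfl; omega
          · intro σ hσ x
            rw [Sol_cons, subst_var] at hσ
            by_cases e : x = A
            · rw [e, hAA, ← hσ.1, subst_subst]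
              apply subst_congr
              intro z _; exact g2 σ hσ.2 z
            · rw [hne x e]; exact g2 σ hσ.2 x
          · intro x hx
            simp only [ca_cons, cb_cons] at hx
            have e : x ≠ A := by rintro rfl; omega
            rw [hne x e]; exact g3 x (by omega)
          · intro x y hy
            simp only [ca_cons, cb_cons]
            by_cases e : x = A
            · rw [e, hAA] at hy
              obtain ⟨z, h1, h2⟩ := count_subst _ _ _ hy
              rcases g4 z y h2 with e | e
              · subst e; right; omega
              · right; omega
            · rw [hne x e] at hy
              have := g4 x y hy; omega
          · intro X hX
            simp only [cb_cons] at hX ⊢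
            have e : X ≠ A := by rintro rfl; omega
            rw [hne X e]
            rcases g5 X (by omega) with e | e
            · left; exact e
            · right; intro y; have := e y; omega
          · intro X Y hXY hX hY z hz h1 h2
            simp only [cb_cons] at hX hY hz
            have e1 : X ≠ A := by rintro rfl; omega
            have e2 : Y ≠ A := by rintro rfl; omega
            rw [hne X e1] at h1
            rw [hne Y e2] at h2
            have hzl : 0 < cb z l := by
              rcases g5 X (by omega) with e | e
              · rw [e, count_var] at h1
                split_ifs at h1 with e
                · subst e; omega
                · omega
              · have := e z; omega
            exact g6 X Y hXY (by omega) (by omega) z hzl h1 h2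
        | fn g bs =>
          have key : ∀ σ, subst σ (.fn f as) = subst σ (.fn g bs) ↔
              f = g ∧ as.map (subst σ) = bs.map (subst σ) := by
            intro σ; rw [subst_fn, subst_fn, Trm.fn.injEq]
          obtain ⟨hfg, hm⟩ := (key σ₀).1 hσa
          have hlen : as.length = bs.length := by simpa using congrArg List.length hm
          have hs : ∀ σ, Sol σ ((.fn f as, .fn g bs) :: l) ↔ Sol σ (as.zip bs ++ l) := by
            intro σ
            rw [Sol_cons, key, Sol_zip σ l as bs hlen]
            simp [hfg]
          have h1 : ∀ x, ca x ((.fn f as, .fn g bs) :: l) = ca x (as.zip bs ++ l) := by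
            intro x; rw [ca_cons, ca_zip _ _ _ hlen, count_fn]
          have h2 : ∀ x, cb x ((.fn f as, .fn g bs) :: l) = cb x (as.zip bs ++ l) := by
            intro x; rw [cb_cons, cb_zip _ _ _ hlen, count_fn]
          obtain ⟨θ, hθ⟩ := IH (as.zip bs ++ l) (by
              have : ((as.zip bs).map (fun e => size e.2)) = bs.map size := by
                rw [← List.map_snd_zip (l₁ := as) (l₂ := bs) hlen.ge, List.map_map,
                  List.map_snd_zip hlen.ge]
                rfl
              rw [List.map_append, List.sum_append, this]
              rw [size_fn] at hn; omega)
            (fun x => by rw [← h1, ← h2, ca_cons, cb_cons]; exact hd x)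
            (fun x => by rw [← h2, cb_cons]; exact hlin x)
            ⟨σ₀, (hs _).1 ((Sol_cons _ _ _ _).2 ⟨hσa, hσl⟩)⟩
          refine ⟨θ, ?_⟩
          unfold Good at hθ ⊢
          simp only [hs, h1, h2]
          exact hθ

end Trm

/-- Let `s` and `t` be equal-length tuples of terms with `Var(s) ∩ Var(t) = ∅`
and `t` linear, and let `S` be a set of variables with `S ∩ Var(t) = ∅`.
If `s` and `t` are unifiable, then there exists a relevant and idempotent mgu
`θ` of `s ≐ t` such that `θ|Var(s)` is linear for `S` and
`Ran(θ|Var(s)) ⊆ Var(t)`. -/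
theorem stmt3 (s t : List Trm) (hlen : s.length = t.length)
    (hdisj : varsL s ∩ varsL t = ∅) (hlin : LinearL t)
    (S : Set ℕ) (hS : S ∩ varsL t = ∅)
    (hu : Unifiable (zipEqs s t)) :
    ∃ θ : ℕ → Trm,
      IsMgu θ (zipEqs s t) ∧
      Dom θ ∪ Ran θ ⊆ varsL s ∪ varsL t ∧
      Idempotent θ ∧
      LinearFor (restrict θ (varsL s)) S ∧
      Ran (restrict θ (varsL s)) ⊆ varsL t := by
  have hv : ∀ (l : List Trm) x, x ∈ varsL l ↔ 0 < countL x l := by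
    intro l x
    rw [Trm.countL_pos]
    simp only [varsL, Set.mem_setOf_eq, Trm.occurs_iff]
  have hca : ∀ x, Trm.ca x (s.zip t) = countL x s := fun x => by
    have := Trm.ca_zip x s t hlen []
    simpa [Trm.ca, countL] using this
  have hcb : ∀ x, Trm.cb x (s.zip t) = countL x t := fun x => by
    have := Trm.cb_zip x s t hlen []
    simpa [Trm.cb, countL] using this
  have hd : ∀ x, countL x s = 0 ∨ countL x t = 0 := by
    intro x
    by_contra hc
    have : x ∈ varsL s ∩ varsL t := ⟨(hv _ _).2 (by omega), (hv _ _).2 (by omega)⟩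
    rw [hdisj] at this
    exact this
  have hSt : ∀ x ∈ S, countL x t = 0 := by
    intro x hx
    by_contra hc
    have : x ∈ S ∩ varsL t := ⟨hx, (hv _ _).2 (by omega)⟩
    rw [hS] at this
    exact this
  obtain ⟨θ, h1, h2, h3, h4, h5, h6⟩ := Trm.main _ (s.zip t) le_rfl
    (fun x => by rw [hca, hcb]; exact hd x) (fun x => by rw [hcb]; exact hlin x) hu
  simp only [hca, hcb] at h3 h4 h5 h6
  have hdom : ∀ x, x ∈ Dom θ → 0 < countL x s + countL x t := by
    intro x hx
    by_contra hc
    exact hx (h3 x (by omega))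
  refine ⟨θ, ⟨h1, fun σ hσ => ⟨σ, h2 σ hσ⟩⟩, ?_, ?_, ?_, ?_⟩
  · intro x hx
    rw [Set.mem_union, hv, hv]
    rcases hx with hx | ⟨y, hy, hx⟩
    · have := hdom x hx; omega
    · rw [Trm.occurs_iff] at hx
      rcases h4 y x hx with e | e
      · rw [e]; have := hdom y hy; omega
      · omega
  · intro u
    rw [Trm.subst_subst]
    apply Trm.subst_congr
    intro x _
    exact (h2 θ h1 x).symm
  · have hr : ∀ X ∈ S, (restrict θ (varsL s) X = .var X ∨
        (restrict θ (varsL s) X = θ X ∧ ∀ y, Trm.count y (θ X) ≤ countL y t)) := by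
      intro X hX
      unfold restrict
      split_ifs
      · rcases h5 X (hSt X hX) with e | e
        · left; exact e
        · right; exact ⟨rfl, e⟩
      · left; rfl
    intro X hX Y hY hne z
    have hz := hlin z
    have hXt := hSt X hX
    have hYt := hSt Y hY
    rcases hr X hX with e | ⟨e, ex⟩ <;> rcases hr Y hY with e' | ⟨e', ey⟩ <;> rw [e, e']
    · simp only [Trm.count_var]
      split_ifs with a b
      · exact absurd (a.trans b.symm) hne
      all_goals omega
    · have := ey z
      simp only [Trm.count_var]
      split_ifs with a
      · subst a; omega
      · omega
    · have := ex z
      simp only [Trm.count_var]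
      split_ifs with a
      · subst a; omega
      · omega
    · have a1 := ex z
      have a2 := ey z
      by_contra hc
      exact h6 X Y hne hXt hYt z (by omega) (by omega) (by omega)
  · rintro x ⟨y, hy, hx⟩
    rw [Trm.occurs_iff] at hx
    rw [hv]
    simp only [Dom, Set.mem_setOf_eq] at hy
    unfold restrict at hx hy
    split_ifs at hx hy with hys
    · rw [hv] at hys
      rcases h5 y (by have := hd y; omega) with e | e
      · exact absurd e hy
      · have := e x; omega
    · exact absurd rfl hy
end

section
/- Let σ be a substitution, X a variable and t a term such that Xσ = tσ. Then for every term u, (u{X/t})σ = uσ, where {X/t} denotes the substitution mapping X to t and every other variable to itself. Consequently, σ is a solution of an equation set E if and only if σ is a solution of E{X/t} (the set obtained by applying {X/t} to both sides of every equation of E). -/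
/-- The substitution `{X/t}` mapping `X` to `t` and every other variable
to itself. -/
def single (X : ℕ) (t : Trm) : ℕ → Trm :=
  fun y => if y = X then t else .var y

/-- The equation set `E{X/t}`: the substitution applied to both sides of
every equation of `E`. -/
def substE (θ : ℕ → Trm) (E : EqSet) : EqSet :=
  (fun e => (Trm.subst θ e.1, Trm.subst θ e.2)) '' E

theorem subst_fn_eq (σ : ℕ → Trm) (f : ℕ) (ts : List Trm) :
    Trm.subst σ (.fn f ts) = .fn f (ts.map (Trm.subst σ)) := by
  rw [Trm.subst]
  congr 1
  exact List.attach_map_val (l := ts) (f := Trm.subst σ)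

theorem subst_single_aux (σ : ℕ → Trm) (X : ℕ) (t : Trm)
    (h : σ X = Trm.subst σ t) :
    ∀ u : Trm, Trm.subst σ (Trm.subst (single X t) u) = Trm.subst σ u
  | .var y => by
    by_cases hy : y = X
    · subst hy
      simp [Trm.subst, single, h]
    · simp [Trm.subst, single, hy]
  | .fn f ts => by
    rw [subst_fn_eq, subst_fn_eq, subst_fn_eq, List.map_map]
    congr 1
    apply List.map_congr_left
    intro a ha
    exact subst_single_aux σ X t h a
termination_by u => sizeOf u
decreasing_by
  have := List.sizeOf_lt_of_mem ha
  simp [Trm.fn.sizeOf_spec]; omega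

/-- Let `σ` be a substitution, `X` a variable and `t` a term such that `Xσ = tσ`.
Then for every term `u`, `(u{X/t})σ = uσ`.  Consequently, `σ` is a solution of
an equation set `E` if and only if `σ` is a solution of `E{X/t}`. -/
theorem stmt4 (σ : ℕ → Trm) (X : ℕ) (t : Trm)
    (h : σ X = Trm.subst σ t) :
    (∀ u : Trm, Trm.subst σ (Trm.subst (single X t) u) = Trm.subst σ u) ∧
    (∀ E : EqSet, Solves σ E ↔ Solves σ (substE (single X t) E)) := by
  have key := subst_single_aux σ X t h
  refine ⟨key, fun E => ?_⟩
  simp only [Solves, substE, Set.forall_mem_image, key]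
end

section
/- There is no infinite sequence E0, E1, E2, … of finite equation sets such that for every i, E_{i+1} is obtained from E_i by an action of MMA⁻; equivalently, MMA⁻ terminates on every finite input equation set. -/
/-- One step of the Martelli–Montanari algorithm MMA: actions (1), (3), (4),
(5).  (Actions (2) and (6) halt with failure and produce no next equation
set; their applicability is captured by `ClashApp` and `OccApp` below.)
Two function applications carry the same function symbol iff they have the
same name and the same number of arguments (fixed arity). -/
inductive MMAStep : EqSet → EqSet → Prop where
  /-- Action (1): replace `f(s1,…,sn) ≐ f(t1,…,tn)` by `s1 ≐ t1, …, sn ≐ tn`. -/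
  | decomp {E : EqSet} {f : ℕ} {sl tl : List Trm} :
      (Trm.fn f sl, Trm.fn f tl) ∈ E → sl.length = tl.length →
      MMAStep E ((E \ {(Trm.fn f sl, Trm.fn f tl)}) ∪ {e | e ∈ sl.zip tl})
  /-- Action (3): delete an equation `X ≐ X`. -/
  | delete {E : EqSet} {x : ℕ} :
      (Trm.var x, Trm.var x) ∈ E →
      MMAStep E (E \ {(Trm.var x, Trm.var x)})
  /-- Action (4): replace `t ≐ X` (`t` not a variable) by `X ≐ t`. -/
  | flip {E : EqSet} {t : Trm} {x : ℕ} :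
      (t, Trm.var x) ∈ E → (∀ y, t ≠ Trm.var y) →
      MMAStep E ((E \ {(t, Trm.var x)}) ∪ {(Trm.var x, t)})
  /-- Action (5): on `X ≐ t` with `X ∉ Var(t)` and `X` occurring elsewhere,
  apply `{X/t}` to all other equations. -/
  | elim {E : EqSet} {x : ℕ} {t : Trm} :
      (Trm.var x, t) ∈ E → ¬ Trm.Occurs x t →
      (∃ e ∈ E \ {(Trm.var x, t)}, Trm.Occurs x e.1 ∨ Trm.Occurs x e.2) →
      MMAStep E ({(Trm.var x, t)} ∪ substE (single x t) (E \ {(Trm.var x, t)}))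

/-- Action (2) is applicable to `E`: `E` contains an equation
`f(s1,…,sn) ≐ g(t1,…,tm)` where the two function symbols differ. -/
def ClashApp (E : EqSet) : Prop :=
  ∃ f sl g tl, (Trm.fn f sl, Trm.fn g tl) ∈ E ∧
    (f ≠ g ∨ sl.length ≠ tl.length)

/-- Action (6) (the occur-check) is applicable to `E`: `E` contains an
equation `X ≐ t` with `X ∈ Var(t)` and `X ≠ t`. -/
def OccApp (E : EqSet) : Prop :=
  ∃ x t, (Trm.var x, t) ∈ E ∧ Trm.Occurs x t ∧ t ≠ Trm.var x

/-- One step of the algorithm MMA⁻ (MMA without the occur-check):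
actions (1), (3), (4), (5a), (5b). -/
inductive MMAmStep : EqSet → EqSet → Prop where
  /-- Action (1). -/
  | decomp {E : EqSet} {f : ℕ} {sl tl : List Trm} :
      (Trm.fn f sl, Trm.fn f tl) ∈ E → sl.length = tl.length →
      MMAmStep E ((E \ {(Trm.fn f sl, Trm.fn f tl)}) ∪ {e | e ∈ sl.zip tl})
  /-- Action (3). -/
  | delete {E : EqSet} {x : ℕ} :
      (Trm.var x, Trm.var x) ∈ E →
      MMAmStep E (E \ {(Trm.var x, Trm.var x)})
  /-- Action (4). -/
  | flip {E : EqSet} {t : Trm} {x : ℕ} :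
      (t, Trm.var x) ∈ E → (∀ y, t ≠ Trm.var y) →
      MMAmStep E ((E \ {(t, Trm.var x)}) ∪ {(Trm.var x, t)})
  /-- Action (5a): on `X ≐ Y` with `X, Y` distinct variables and `X`
  occurring elsewhere, apply `{X/Y}` to all other equations. -/
  | elimVar {E : EqSet} {x y : ℕ} :
      (Trm.var x, Trm.var y) ∈ E → x ≠ y →
      (∃ e ∈ E \ {(Trm.var x, Trm.var y)}, Trm.Occurs x e.1 ∨ Trm.Occurs x e.2) →
      MMAmStep E
        ({(Trm.var x, Trm.var y)} ∪
          substE (single x (Trm.var y)) (E \ {(Trm.var x, Trm.var y)}))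
  /-- Action (5b): on `X ≐ t`, `X ≐ u` with `t, u` distinct non-variable
  terms and `|t| ≤ |u|`, replace `X ≐ u` by `t ≐ u`. -/
  | merge {E : EqSet} {x : ℕ} {t u : Trm} :
      (Trm.var x, t) ∈ E → (Trm.var x, u) ∈ E → t ≠ u →
      (∀ y, t ≠ Trm.var y) → (∀ y, u ≠ Trm.var y) → t.size ≤ u.size →
      MMAmStep E ((E \ {(Trm.var x, u)}) ∪ {(t, u)})

/-- `F` is reachable from `E` by (non-failing) actions of MMA. -/
def Reachable (E F : EqSet) : Prop := Relation.ReflTransGen MMAStep E F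

/-- `E` is NSTO: no run of MMA on `E` performs action (6), i.e. the
occur-check action is never applicable along any run. -/
def NSTO (E : EqSet) : Prop := ∀ F, Reachable E F → ¬ OccApp F

/-- `E` is WNSTO: there exists an occur-check free run of MMA on `E`, i.e. a
maximal run that either halts with failure by action (2), or ends with an
equation set to which no action (including (2) and (6)) applies — without
ever performing action (6). -/
def WNSTO (E : EqSet) : Prop :=
  ∃ F, Reachable E F ∧
    (ClashApp F ∨ (¬ ClashApp F ∧ ¬ OccApp F ∧ ∀ F', ¬ MMAStep F F'))

theorem aux_size_lt {f : ℕ} {ts : List Trm} {t : Trm} (h : t ∈ ts) :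
    t.size < (Trm.fn f ts).size := by
  rw [Trm.size]
  have : t.size ≤ (ts.attach.map (fun x => Trm.size x.1)).sum :=
    List.le_sum_of_mem (List.mem_map.2 ⟨⟨t, h⟩, List.mem_attach _ _, rfl⟩)
  have h2 : (ts.attach.map (fun x => Trm.size x.1)) =
    (ts.attach.map (fun ⟨t, _⟩ => Trm.size t)) := rfl
  rw [← h2]
  omega

theorem aux_occ_finite : ∀ t : Trm, {x | Trm.Occurs x t}.Finite
  | .var y => by
    refine (Set.finite_singleton y).subset ?_
    intro x hx
    cases hx
    rfl
  | .fn f ts => by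
    have h : (⋃ t : {t // t ∈ ts}, {x | Trm.Occurs x t.1}).Finite := by
      haveI : Finite {t // t ∈ ts} := (List.finite_toSet ts)
      exact Set.finite_iUnion (fun t => aux_occ_finite t.1)
    refine h.subset ?_
    intro x hx
    cases hx with
    | fn hm ho => exact Set.mem_iUnion.2 ⟨⟨_, hm⟩, ho⟩
termination_by t => t.size
decreasing_by exact aux_size_lt t.2

theorem aux_occ_subst (x a b : ℕ) : ∀ t : Trm,
    Trm.Occurs x (Trm.subst (single a (.var b)) t) → (Trm.Occurs x t ∧ x ≠ a) ∨ x = b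
  | .var y => by
    rw [Trm.subst, single]
    split_ifs with h
    · intro hx
      cases hx
      exact Or.inr rfl
    · intro hx
      cases hx
      exact Or.inl ⟨.var, h⟩
  | .fn f ts => by
    rw [Trm.subst]
    intro hx
    cases hx with
    | fn hm ho =>
      obtain ⟨⟨t, ht⟩, -, rfl⟩ := List.mem_map.1 hm
      rcases aux_occ_subst x a b t ho with h | h
      · exact Or.inl ⟨.fn ht h.1, h.2⟩
      · exact Or.inr h
termination_by t => t.size
decreasing_by exact aux_size_lt ht

def OccE (x : ℕ) (e : Trm × Trm) : Prop := Trm.Occurs x e.1 ∨ Trm.Occurs x e.2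

def GoodV (x : ℕ) (E : EqSet) : Prop :=
  ∃ y, y ≠ x ∧ ∀ e ∈ E, OccE x e → e = (Trm.var x, Trm.var y)

def BadSet (E : EqSet) : Set ℕ := {x | ¬ GoodV x E}

theorem badSet_finite {E : EqSet} (hE : E.Finite) : (BadSet E).Finite := by
  have h : (⋃ e ∈ E, {x | OccE x e}).Finite :=
    hE.biUnion (fun e _ => (aux_occ_finite e.1).union (aux_occ_finite e.2))
  refine h.subset ?_
  intro x hx
  by_contra hc
  refine hx ⟨x + 1, by omega, fun e he ho => ?_⟩
  exact absurd (Set.mem_biUnion he (show x ∈ {x | OccE x e} from ho)) hc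

theorem good_of_subset {E S : EqSet} {e₀ : Trm × Trm} {x : ℕ}
    (hS : ∀ e ∈ S, OccE x e → ∃ e' ∈ E, OccE x e' ∧ ∀ y z, e' ≠ (Trm.var y, Trm.var z))
    (h : GoodV x E) : GoodV x ((E \ {e₀}) ∪ S) := by
  obtain ⟨y, hy, hE⟩ := h
  refine ⟨y, hy, ?_⟩
  rintro e (he | he) ho
  · exact hE e he.1 ho
  · obtain ⟨e', he', ho', hne⟩ := hS e he ho
    exact absurd (hE e' he' ho') (hne _ _)

theorem good_elim {E : EqSet} {a b x : ℕ} (hab : a ≠ b)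
    (hm : (Trm.var a, Trm.var b) ∈ E) (h : GoodV x E ∨ x = a) :
    GoodV x ({(Trm.var a, Trm.var b)} ∪
          substE (single a (Trm.var b)) (E \ {(Trm.var a, Trm.var b)})) := by
  by_cases hxa : x = a
  · subst hxa
    refine ⟨b, hab.symm, ?_⟩
    rintro e (he | ⟨e, he, rfl⟩) ho
    · exact he
    · exfalso
      rcases ho with ho | ho <;> rcases aux_occ_subst _ _ _ _ ho with h | h
      · exact h.2 rfl
      · exact hab h
      · exact h.2 rfl
      · exact hab h
  · obtain ⟨y, hy, hE⟩ := h.resolve_right hxa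
    have hxb : x ≠ b := by
      rintro rfl
      have := hE _ hm (Or.inr .var)
      simp only [Prod.mk.injEq, Trm.var.injEq] at this
      exact hxa this.1.symm
    refine ⟨if y = a then b else y, by split_ifs <;> [exact hxb.symm; exact hy], ?_⟩
    rintro e (he | ⟨e, he, rfl⟩) ho
    · obtain rfl : e = _ := he
      have := hE _ hm ho
      simp only [Prod.mk.injEq, Trm.var.injEq] at this
      exact absurd this.1.symm hxa
    · have ho' : OccE x e := by
        rcases ho with ho | ho <;> rcases aux_occ_subst _ _ _ _ ho with h | h
        · exact Or.inl h.1
        · exact absurd h hxb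
        · exact Or.inr h.1
        · exact absurd h hxb
      have := hE e he.1 ho'
      subst this
      simp only [Trm.subst, single, if_neg hxa]
      split_ifs <;> rfl

def eqKind : Trm × Trm → ℕ
  | (.var _, .fn _ _) => 1
  | (.fn _ _, .var _) => 2
  | _ => 0

theorem eqKind_le (e : Trm × Trm) : eqKind e ≤ 2 := by
  unfold eqKind; split <;> omega

def eqRank (e : Trm × Trm) : ℕ := 3 * max e.1.size e.2.size + eqKind e

open Classical in
noncomputable def toM {E : EqSet} (h : E.Finite) : Multiset (Trm × Trm) := h.toFinset.val

theorem toM_cut {E S F : EqSet} {e : Trm × Trm} (hE : E.Finite) (hF : F.Finite)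
    (he : e ∈ E) (hFe : F = (E \ {e}) ∪ S) (hS : ∀ e' ∈ S, eqRank e' < eqRank e) :
    Relation.CutExpand (InvImage (· < ·) eqRank) (toM hF) (toM hE) := by
  classical
  have hSf : S.Finite := hF.subset (by rw [hFe]; exact Set.subset_union_right)
  refine ⟨(hSf.toFinset \ (hE.toFinset.erase e)).val, e, ?_, ?_⟩
  · intro a ha
    exact hS a (by simpa using (Finset.mem_sdiff.1 ha).1)
  · unfold toM
    have h1 : hF.toFinset = (hE.toFinset.erase e).disjUnion
        (hSf.toFinset \ (hE.toFinset.erase e)) Finset.disjoint_sdiff := by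
      ext a
      simp [hFe]
      tauto
    have h2 : hE.toFinset.val = (hE.toFinset.erase e).val + {e} := by
      rw [Finset.erase_val, add_comm, Multiset.singleton_add, Multiset.cons_erase]
      simpa using he
    rw [h1, h2, Finset.disjUnion_val]
    abel

theorem step_dec {E F : EqSet} (hE : E.Finite) (hF : F.Finite) (h : MMAmStep E F) :
    BadSet F ⊂ BadSet E ∨ (BadSet F ⊆ BadSet E ∧
      Relation.CutExpand (InvImage (· < ·) eqRank) (toM hF) (toM hE)) := by
  cases h with
  | @decomp f sl tl hm hl =>
    refine Or.inr ⟨?_, toM_cut hE hF hm rfl ?_⟩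
    · intro x hx hg
      refine hx (good_of_subset ?_ hg)
      rintro ⟨s, t⟩ he ho
      have := List.of_mem_zip he
      refine ⟨_, hm, ?_, by simp⟩
      rcases ho with ho | ho
      · exact Or.inl (.fn this.1 ho)
      · exact Or.inr (.fn this.2 ho)
    · rintro ⟨s, t⟩ he
      have := List.of_mem_zip he
      have h1 := aux_size_lt (f := f) this.1
      have h2 := aux_size_lt (f := f) this.2
      have h3 := eqKind_le (s, t)
      simp only [eqRank]
      omega
  | @delete x hm =>
    refine Or.inr ⟨?_, toM_cut (S := ∅) hE hF hm (by simp) (by simp)⟩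
    rintro z hz ⟨y, hy, hg⟩
    exact hz ⟨y, hy, fun e he => hg e he.1⟩
  | @flip t x hm ht =>
    refine Or.inr ⟨?_, toM_cut hE hF hm rfl ?_⟩
    · intro z hz hg
      refine hz (good_of_subset ?_ hg)
      rintro e rfl ho
      refine ⟨_, hm, ho.symm, ?_⟩
      intro y w hh
      exact ht y (Prod.mk.inj hh).1
    · rintro e rfl
      cases t with
      | var y => exact absurd rfl (ht y)
      | fn f ts =>
        simp only [eqRank, eqKind]
        omega
  | @elimVar a b hm hab hex =>
    refine Or.inl ⟨?_, ?_⟩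
    · intro z hz hg
      exact hz (good_elim hab hm (Or.inl hg))
    · intro hsub
      have ha : a ∈ BadSet E := by
        rintro ⟨y, hy, hg⟩
        obtain ⟨e, he, ho⟩ := hex
        exact he.2 ((hg e he.1 ho).trans (hg _ hm (Or.inl .var)).symm)
      exact hsub ha (good_elim hab hm (Or.inr rfl))
  | @merge x t u ht hu hne htv huv hsz =>
    refine Or.inr ⟨?_, toM_cut hE hF hu rfl ?_⟩
    · intro z hz hg
      refine hz (good_of_subset ?_ hg)
      rintro e rfl ho
      rcases ho with ho | ho
      · exact ⟨_, ht, Or.inr ho, fun y w hh => htv w (Prod.mk.inj hh).2⟩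
      · exact ⟨_, hu, Or.inr ho, fun y w hh => huv w (Prod.mk.inj hh).2⟩
    · rintro e rfl
      cases t with
      | var y => exact absurd rfl (htv y)
      | fn f ts =>
        cases u with
        | var y => exact absurd rfl (huv y)
        | fn g us =>
          simp only [eqRank, eqKind]
          omega

/-- There is no infinite sequence `E0, E1, E2, …` of finite equation sets such
that for every `i`, `E_{i+1}` is obtained from `E_i` by an action of MMA⁻;
i.e. MMA⁻ terminates on every finite input equation set. -/
theorem stmt7 :
    ¬ ∃ Es : ℕ → EqSet,
        (∀ i, (Es i).Finite) ∧ (∀ i, MMAmStep (Es i) (Es (i + 1))) := by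
  rintro ⟨Es, hfin, hstep⟩
  have hwf : WellFounded (Relation.CutExpand (InvImage (· < ·) eqRank)) :=
    (InvImage.wf eqRank Nat.lt_wfRel.wf).cutExpand
  have hlex := WellFounded.prod_lex Nat.lt_wfRel.wf hwf
  let g : ℕ → ℕ × Multiset (Trm × Trm) := fun i => ((BadSet (Es i)).ncard, toM (hfin i))
  have hg : ∀ i, Prod.Lex (· < ·) (Relation.CutExpand (InvImage (· < ·) eqRank))
      (g (i + 1)) (g i) := by
    intro i
    rcases step_dec (hfin i) (hfin (i + 1)) (hstep i) with h | ⟨h1, h2⟩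
    · exact Prod.Lex.left _ _ (Set.ncard_lt_ncard h (badSet_finite (hfin i)))
    · rcases (Set.ncard_le_ncard h1 (badSet_finite (hfin i))).lt_or_eq with h | h
      · exact Prod.Lex.left _ _ h
      · exact Prod.lex_def.2 (Or.inr ⟨h, h2⟩)
  obtain ⟨m, ⟨i, rfl⟩, hm⟩ := hlex.has_min (Set.range g) ⟨_, 0, rfl⟩
  exact hm _ ⟨i + 1, rfl⟩ (hg i)
end

section
/- Let E1 and E2 be finite equation sets. If E1 is NSTO, θ1 is a most general unifier of E1, and the equation set E2θ1 = {sθ1 ≐ tθ1 | s ≐ t ∈ E2} is NSTO, then E1 ∪ E2 is WNSTO. -/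
namespace MMAaux

theorem subst_var (σ : ℕ → Trm) (x : ℕ) : Trm.subst σ (.var x) = σ x := by
  simp [Trm.subst]

theorem subst_fn (σ : ℕ → Trm) (f : ℕ) (ts : List Trm) :
    Trm.subst σ (.fn f ts) = .fn f (ts.map (Trm.subst σ)) := by
  simp [Trm.subst]

def wt : Trm → ℕ
  | .var _ => 1
  | .fn _ ts => 2 + (ts.attach.map (fun ⟨t, _⟩ => wt t)).sum
decreasing_by
  have := List.sizeOf_lt_of_mem ‹_ ∈ ts›
  simp [Trm.fn.sizeOf_spec]; omega

theorem wt_var (x : ℕ) : wt (.var x) = 1 := by simp [wt]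
theorem wt_fn (f : ℕ) (ts : List Trm) : wt (.fn f ts) = 2 + (ts.map wt).sum := by
  simp [wt]

theorem trm_ind {P : Trm → Prop} (hv : ∀ x, P (.var x))
    (hf : ∀ f ts, (∀ t ∈ ts, P t) → P (.fn f ts)) : ∀ t, P t
  | .var x => hv x
  | .fn f ts => hf f ts (fun t ht => trm_ind hv hf t)
decreasing_by
  have := List.sizeOf_lt_of_mem ht
  simp [Trm.fn.sizeOf_spec]; omega

theorem occ_var {x y : ℕ} : Trm.Occurs x (.var y) ↔ x = y := by
  constructor
  · intro h; cases h; rfl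
  · rintro rfl; exact .var

theorem occ_fn {x f : ℕ} {ts : List Trm} :
    Trm.Occurs x (.fn f ts) ↔ ∃ t ∈ ts, Trm.Occurs x t := by
  constructor
  · intro h
    cases h with
    | fn h1 h2 => exact ⟨_, h1, h2⟩
  · rintro ⟨t, h1, h2⟩; exact .fn h1 h2

theorem subst_congr {σ τ : ℕ → Trm} (t : Trm) :
    (∀ x, Trm.Occurs x t → σ x = τ x) → Trm.subst σ t = Trm.subst τ t := by
  induction t using trm_ind with
  | hv x => intro h; rw [subst_var, subst_var]; exact h x .var
  | hf f ts ih =>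
    intro h
    rw [subst_fn, subst_fn]
    congr 1
    apply List.map_congr_left
    intro t ht
    exact ih t ht (fun x hx => h x (.fn ht hx))

theorem subst_id (t : Trm) : Trm.subst .var t = t := by
  induction t using trm_ind with
  | hv x => rw [subst_var]
  | hf f ts ih =>
    rw [subst_fn]
    congr 1
    conv_rhs => rw [← List.map_id ts]
    apply List.map_congr_left
    intro t ht
    exact ih t ht

theorem subst_comp (σ τ : ℕ → Trm) (t : Trm) :
    Trm.subst τ (Trm.subst σ t) = Trm.subst (fun x => Trm.subst τ (σ x)) t := by
  induction t using trm_ind with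
  | hv x => rw [subst_var, subst_var]
  | hf f ts ih =>
    rw [subst_fn, subst_fn, subst_fn, List.map_map]
    congr 1
    apply List.map_congr_left
    intro t ht
    exact ih t ht

theorem occ_subst {σ : ℕ → Trm} {y : ℕ} (t : Trm) :
    Trm.Occurs y (Trm.subst σ t) ↔ ∃ x, Trm.Occurs x t ∧ Trm.Occurs y (σ x) := by
  induction t using trm_ind with
  | hv x => rw [subst_var]; simp [occ_var]
  | hf f ts ih =>
    rw [subst_fn, occ_fn]
    simp only [List.mem_map, occ_fn]
    constructor
    · rintro ⟨_, ⟨t, ht, rfl⟩, h⟩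
      obtain ⟨x, h1, h2⟩ := (ih t ht).1 h
      exact ⟨x, ⟨t, ht, h1⟩, h2⟩
    · rintro ⟨x, ⟨t, ht, h1⟩, h2⟩
      exact ⟨_, ⟨t, ht, rfl⟩, (ih t ht).2 ⟨x, h1, h2⟩⟩

theorem subst_single_not {x : ℕ} {t u : Trm} (h : ¬ Trm.Occurs x u) :
    Trm.subst (single x t) u = u := by
  conv_rhs => rw [← subst_id u]
  apply subst_congr
  intro y hy
  have : y ≠ x := by rintro rfl; exact h hy
  simp [single, this]

theorem subst_single_solved {σ : ℕ → Trm} {x : ℕ} {t : Trm} (h : σ x = Trm.subst σ t) (u : Trm) :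
    Trm.subst σ (Trm.subst (single x t) u) = Trm.subst σ u := by
  rw [subst_comp]
  apply subst_congr
  intro y _
  by_cases hy : y = x
  · subst hy; simp [single, h]
  · simp [single, hy, subst_var]

theorem occ_single {x y : ℕ} {t u : Trm} (h : Trm.Occurs y (Trm.subst (single x t) u)) :
    (y ≠ x ∧ Trm.Occurs y u) ∨ (Trm.Occurs x u ∧ Trm.Occurs y t) := by
  obtain ⟨z, h1, h2⟩ := (occ_subst u).1 h
  by_cases hz : z = x
  · subst hz; right; simp [single] at h2; exact ⟨h1, h2⟩
  · left; simp [single, hz, occ_var] at h2; subst h2; exact ⟨hz, h1⟩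

theorem wt_pos (t : Trm) : 1 ≤ wt t := by
  cases t with
  | var x => rw [wt_var]
  | fn f ts => rw [wt_fn]; omega

theorem wt_occ {σ : ℕ → Trm} {x : ℕ} (t : Trm) :
    Trm.Occurs x t → wt (σ x) ≤ wt (Trm.subst σ t) ∧
      (t ≠ .var x → wt (σ x) < wt (Trm.subst σ t)) := by
  induction t using trm_ind with
  | hv y => intro h; rw [occ_var] at h; subst h; simp [subst_var]
  | hf f ts ih =>
    intro h
    obtain ⟨t, ht, hx⟩ := occ_fn.1 h
    have h1 := (ih t ht hx).1
    rw [subst_fn, wt_fn]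
    have h2 : wt (Trm.subst σ t) ≤ ((ts.map (Trm.subst σ)).map wt).sum :=
      List.single_le_sum (by simp) _ (by
        simp only [List.map_map, List.mem_map]; exact ⟨t, ht, rfl⟩)
    exact ⟨by omega, fun _ => by omega⟩

theorem occ_not_solves {E : EqSet} (h : OccApp E) (σ : ℕ → Trm) : ¬ Solves σ E := by
  obtain ⟨x, t, hm, ho, hne⟩ := h
  intro hs
  have h1 := hs _ hm
  simp only [subst_var] at h1
  have h2 := (wt_occ (σ := σ) t ho).2 hne
  rw [h1] at h2
  exact lt_irrefl _ h2

theorem clash_not_solves {E : EqSet} (h : ClashApp E) (σ : ℕ → Trm) : ¬ Solves σ E := by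
  obtain ⟨f, sl, g, tl, hm, hc⟩ := h
  intro hs
  have h1 := hs _ hm
  simp only [subst_fn] at h1
  injection h1 with h1 h2
  have := congrArg List.length h2
  simp at this
  tauto

/-! Steps. -/

theorem map_eq_iff_zip (σ : ℕ → Trm) : ∀ (sl tl : List Trm), sl.length = tl.length →
    (sl.map (Trm.subst σ) = tl.map (Trm.subst σ) ↔
      ∀ e ∈ sl.zip tl, Trm.subst σ e.1 = Trm.subst σ e.2)
  | [], [], _ => by simp
  | [], _ :: _, h => by simp at h
  | _ :: _, [], h => by simp at h
  | a :: sl, b :: tl, h => by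
    have := map_eq_iff_zip σ sl tl (by simpa using h)
    simp only [List.map_cons, List.cons.injEq, this, List.zip_cons_cons, List.mem_cons,
      forall_eq_or_imp]

theorem step_solves {E F : EqSet} (h : MMAStep E F) (σ : ℕ → Trm) : Solves σ E ↔ Solves σ F := by
  cases h with
  | @decomp f sl tl hm hl =>
    have key : Trm.subst σ (.fn f sl) = Trm.subst σ (.fn f tl) ↔
      ∀ e ∈ sl.zip tl, Trm.subst σ e.1 = Trm.subst σ e.2 := by
      rw [← map_eq_iff_zip σ sl tl hl, subst_fn, subst_fn]; simp
    constructor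
    · intro hs e he
      rcases he with he | he
      · exact hs e he.1
      · exact key.1 (hs _ hm) e he
    · intro hs e he
      by_cases hq : e = (.fn f sl, .fn f tl)
      · subst hq; exact key.2 (fun e he => hs e (Or.inr he))
      · exact hs e (Or.inl ⟨he, hq⟩)
  | @delete x hm =>
    constructor
    · intro hs e he; exact hs e he.1
    · intro hs e he
      by_cases hq : e = (.var x, .var x)
      · subst hq; rfl
      · exact hs e ⟨he, hq⟩
  | @flip t x hm hn =>
    constructor
    · intro hs e he
      rcases he with he | he
      · exact hs e he.1
      · rw [Set.mem_singleton_iff] at he; subst he; exact (hs _ hm).symm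
    · intro hs e he
      by_cases hq : e = (t, .var x)
      · subst hq; exact (hs (.var x, t) (Or.inr rfl)).symm
      · exact hs e (Or.inl ⟨he, hq⟩)
  | @elim x t hm ho he =>
    constructor
    · intro hs e he
      have h1 := hs _ hm
      simp only [subst_var] at h1
      rcases he with he | ⟨e', he', rfl⟩
      · rw [Set.mem_singleton_iff] at he; subst he; exact hs _ hm
      · simp only [subst_single_solved h1]; exact hs _ he'.1
    · intro hs e he
      have h1 := hs (.var x, t) (Or.inl rfl)
      simp only [subst_var] at h1
      by_cases hq : e = (.var x, t)
      · subst hq; exact hs (.var x, t) (Or.inl rfl)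
      · have := hs _ (Or.inr ⟨e, ⟨he, hq⟩, rfl⟩)
        simpa only [subst_single_solved h1] using this

theorem reach_solves {E F : EqSet} (h : Reachable E F) (σ : ℕ → Trm) :
    Solves σ E ↔ Solves σ F := by
  induction h with
  | refl => rfl
  | tail _ h ih => exact ih.trans (step_solves h σ)

theorem finite_list (l : List (Trm × Trm)) : ({e | e ∈ l} : Set (Trm × Trm)).Finite :=
  List.finite_toSet l

theorem step_finite {E F : EqSet} (h : MMAStep E F) (hE : E.Finite) : F.Finite := by
  cases h with
  | decomp hm hl => exact (hE.diff).union (finite_list _)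
  | delete hm => exact hE.diff
  | flip hm hn => exact (hE.diff).union (Set.finite_singleton _)
  | elim hm ho he => exact (Set.finite_singleton _).union ((hE.diff).image _)

theorem reach_finite {E F : EqSet} (h : Reachable E F) (hE : E.Finite) : F.Finite := by
  induction h with
  | refl => exact hE
  | tail _ h ih => exact step_finite h ih

theorem step_mono {A A' B : EqSet} (h : MMAStep A A') (hs : A ⊆ B) :
    ∃ B', MMAStep B B' ∧ A' ⊆ B' := by
  cases h with
  | decomp hm hl =>
    exact ⟨_, .decomp (hs hm) hl, Set.union_subset_union_left _ (Set.diff_subset_diff_left hs)⟩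
  | delete hm => exact ⟨_, .delete (hs hm), Set.diff_subset_diff_left hs⟩
  | flip hm hn =>
    exact ⟨_, .flip (hs hm) hn, Set.union_subset_union_left _ (Set.diff_subset_diff_left hs)⟩
  | elim hm ho he =>
    obtain ⟨e, he, ho'⟩ := he
    exact ⟨_, .elim (hs hm) ho ⟨e, Set.diff_subset_diff_left hs he, ho'⟩,
      Set.union_subset_union_right _ (Set.image_mono (Set.diff_subset_diff_left hs))⟩

theorem reach_mono {A A' B : EqSet} (h : Reachable A A') (hs : A ⊆ B) :
    ∃ B', Reachable B B' ∧ A' ⊆ B' := by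
  induction h with
  | refl => exact ⟨B, .refl, hs⟩
  | tail _ h ih =>
    obtain ⟨C, h1, h2⟩ := ih
    obtain ⟨D, h3, h4⟩ := step_mono h h2
    exact ⟨D, h1.tail h3, h4⟩

theorem clash_mono {A B : EqSet} (h : ClashApp A) (hs : A ⊆ B) : ClashApp B := by
  obtain ⟨f, sl, g, tl, hm, hc⟩ := h
  exact ⟨f, sl, g, tl, hs hm, hc⟩

theorem occ_mono {A B : EqSet} (h : OccApp A) (hs : A ⊆ B) : OccApp B := by
  obtain ⟨f, sl, hm, hc⟩ := h
  exact ⟨f, sl, hs hm, hc⟩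

theorem nsto_mono {A B : EqSet} (h : NSTO B) (hs : A ⊆ B) : NSTO A := by
  intro F hF ho
  obtain ⟨G, hG, hsub⟩ := reach_mono hF hs
  exact h G hG (occ_mono ho hsub)

/-! Termination. -/

def OccE (x : ℕ) (e : Trm × Trm) : Prop := Trm.Occurs x e.1 ∨ Trm.Occurs x e.2

def SolvedV (E : EqSet) (x : ℕ) : Prop :=
  ∃ t, (Trm.var x, t) ∈ E ∧ ¬ Trm.Occurs x t ∧ ∀ e ∈ E, e ≠ (Trm.var x, t) → ¬ OccE x e

def Uns (E : EqSet) : Set ℕ := {x | (∃ e ∈ E, OccE x e) ∧ ¬ SolvedV E x}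

theorem finite_occ (t : Trm) : {x | Trm.Occurs x t}.Finite := by
  induction t using trm_ind with
  | hv y => simp [occ_var]
  | hf f ts ih =>
    have : {x | Trm.Occurs x (.fn f ts)} = ⋃ t ∈ {t | t ∈ ts}, {x | Trm.Occurs x t} := by
      ext x; simp [occ_fn]
    rw [this]
    exact Set.Finite.biUnion (List.finite_toSet ts) ih

theorem finite_uns {E : EqSet} (hE : E.Finite) : (Uns E).Finite := by
  have : Uns E ⊆ ⋃ e ∈ E, ({x | Trm.Occurs x e.1} ∪ {x | Trm.Occurs x e.2}) := by
    rintro x ⟨⟨e, he, hx⟩, _⟩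
    simp only [Set.mem_iUnion]
    exact ⟨e, he, hx⟩
  exact (Set.Finite.biUnion hE (fun e _ => (finite_occ _).union (finite_occ _))).subset this

def wE (e : Trm × Trm) : ℕ := 2 * wt e.1 + wt e.2

noncomputable def W (E : EqSet) : ℕ := ∑ᶠ e ∈ E, wE e

theorem W_union_le {A B : EqSet} (hA : A.Finite) (hB : B.Finite) : W (A ∪ B) ≤ W A + W B := by
  have := finsum_mem_union_inter (f := wE) hA hB
  unfold W
  omega

theorem W_single (e : Trm × Trm) : W {e} = wE e := by
  unfold W; exact finsum_mem_singleton

theorem W_remove {A : EqSet} (hA : A.Finite) {e : Trm × Trm} (he : e ∈ A) :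
    W A = W (A \ {e}) + wE e := by
  have h := finsum_mem_union (f := wE) (s := A \ {e}) (t := {e})
    Set.disjoint_sdiff_left (hA.diff) (Set.finite_singleton e)
  rw [Set.diff_union_of_subset (by simpa using he), finsum_mem_singleton] at h
  exact h

theorem W_list : ∀ (l : List (Trm × Trm)), W {e | e ∈ l} ≤ (l.map wE).sum
  | [] => by simp [W]
  | a :: l => by
    have h : ({e | e ∈ a :: l} : Set (Trm × Trm)) = {a} ∪ {e | e ∈ l} := by
      ext e; simp
    have h2 := W_union_le (Set.finite_singleton a) (finite_list l)
    have h3 := W_list l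
    rw [h, List.map_cons, List.sum_cons]
    rw [W_single] at h2
    omega

theorem zip_sum : ∀ (sl tl : List Trm),
    ((sl.zip tl).map wE).sum ≤ 2 * (sl.map wt).sum + (tl.map wt).sum
  | [], _ => by simp
  | _ :: _, [] => by simp
  | a :: sl, b :: tl => by
    have := zip_sum sl tl
    simp only [List.zip_cons_cons, List.map_cons, List.sum_cons, wE] at *
    omega

theorem occ_zip {x f : ℕ} {sl tl : List Trm} {e : Trm × Trm} (he : e ∈ sl.zip tl)
    (h : OccE x e) : OccE x (.fn f sl, .fn f tl) := by
  obtain ⟨a, b⟩ := e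
  have := List.of_mem_zip he
  rcases h with h | h
  · exact Or.inl (.fn this.1 h)
  · exact Or.inr (.fn this.2 h)

/-- Generic non-elimination step. -/
theorem uns_sub {E F : EqSet} (hocc : ∀ e ∈ F, e ∉ E → ∃ e' ∈ E, e' ∉ F ∧
      (∀ x, OccE x e → OccE x e') )
    (hrem : ∀ x t, (Trm.var x, t) ∈ E → ¬ Trm.Occurs x t → (Trm.var x, t) ∈ F) :
    Uns F ⊆ Uns E := by
  rintro x ⟨⟨e, he, hx⟩, hns⟩
  refine ⟨?_, ?_⟩
  · by_cases h : e ∈ E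
    · exact ⟨e, h, hx⟩
    · obtain ⟨e', h1, _, h2⟩ := hocc e he h
      exact ⟨e', h1, h2 x hx⟩
  · rintro ⟨t, h1, h2, h3⟩
    apply hns
    refine ⟨t, hrem x t h1 h2, h2, ?_⟩
    intro e he hne hxe
    by_cases h : e ∈ E
    · exact h3 e h hne hxe
    · obtain ⟨e', h4, h6, h5⟩ := hocc e he h
      refine h3 e' h4 ?_ (h5 x hxe)
      rintro rfl
      exact h6 (hrem x t h1 h2)

theorem wt_zip_lt {f : ℕ} {sl tl : List Trm} {e : Trm × Trm} (he : e ∈ sl.zip tl) :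
    e ≠ (.fn f sl, .fn f tl) := by
  rintro rfl
  have h1 := (List.of_mem_zip he).1
  have h2 : wt (.fn f sl) ≤ (sl.map wt).sum :=
    List.single_le_sum (by simp) _ (List.mem_map_of_mem h1)
  rw [wt_fn] at h2
  omega

theorem uns_elim {E : EqSet} {x : ℕ} {t : Trm} (hm : (Trm.var x, t) ∈ E)
    (ho : ¬ Trm.Occurs x t) (he : ∃ e ∈ E \ {(Trm.var x, t)}, OccE x e) :
    Uns ({(Trm.var x, t)} ∪ substE (single x t) (E \ {(Trm.var x, t)})) ⊂ Uns E := by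
  have hnx : ∀ e ∈ substE (single x t) (E \ {(Trm.var x, t)}), ¬ OccE x e := by
    rintro _ ⟨e, _, rfl⟩ h
    rcases h with h | h
    · rcases occ_single h with h | h
      · exact h.1 rfl
      · exact ho h.2
    · rcases occ_single h with h | h
      · exact h.1 rfl
      · exact ho h.2
  have hxs : SolvedV ({(Trm.var x, t)} ∪ substE (single x t) (E \ {(Trm.var x, t)})) x := by
    refine ⟨t, Or.inl rfl, ho, ?_⟩
    rintro e (he | he) hne
    · exact absurd he hne
    · exact hnx e he
  have hxu : x ∈ Uns E := by
    refine ⟨⟨_, hm, Or.inl .var⟩, ?_⟩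
    rintro ⟨t', h1, h2, h3⟩
    by_cases htt : t' = t
    · subst htt
      obtain ⟨e, he, hx⟩ := he
      exact h3 e he.1 he.2 hx
    · exact h3 _ hm (by simpa using fun h => htt h.symm) (Or.inl .var)
  have hocc : ∀ y, ∀ e, OccE y (Trm.subst (single x t) e.1, Trm.subst (single x t) e.2) →
      OccE y e ∨ Trm.Occurs y t := by
    rintro y e (h | h)
    · rcases occ_single h with h | h
      · exact Or.inl (Or.inl h.2)
      · exact Or.inr h.2
    · rcases occ_single h with h | h
      · exact Or.inl (Or.inr h.2)
      · exact Or.inr h.2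
  refine ⟨?_, fun h => (h hxu).2 hxs⟩
  rintro y ⟨⟨e, he, hy⟩, hns⟩
  refine ⟨?_, ?_⟩
  · rcases he with he | ⟨e', he', rfl⟩
    · rw [Set.mem_singleton_iff] at he; subst he; exact ⟨_, hm, hy⟩
    · rcases hocc y e' hy with h | h
      · exact ⟨e', he'.1, h⟩
      · exact ⟨_, hm, Or.inr h⟩
  · rintro ⟨u, h1, h2, h3⟩
    apply hns
    have hyx : y ≠ x := by rintro rfl; exact hns hxs
    have hne : (Trm.var x, t) ≠ (Trm.var y, u) := by
      intro h; injection h with h _; injection h with h; exact hyx h.symm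
    have h4 := h3 _ hm hne
    have h5 : ¬ Trm.Occurs y t := fun h => h4 (Or.inr h)
    refine ⟨Trm.subst (single x t) u, Or.inr ⟨(.var y, u), ⟨h1, hne.symm⟩, ?_⟩, ?_, ?_⟩
    · simp [subst_var, single, hyx]
    · intro h
      rcases occ_single h with h | h
      · exact h2 h.2
      · exact h5 h.2
    · rintro e (he | ⟨e', he', rfl⟩) hn h
      · rw [Set.mem_singleton_iff] at he; subst he; exact h4 h
      · have : e' ≠ (.var y, u) := by
          rintro rfl
          exact hn (by simp [subst_var, single, hyx])
        rcases hocc y e' h with h | h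
        · exact h3 e' he'.1 this h
        · exact h5 h

theorem step_lt {E F : EqSet} (hE : E.Finite) (h : MMAStep E F) :
    Prod.Lex (· < ·) (· < ·) ((Uns F).ncard, W F) ((Uns E).ncard, W E) := by
  have hF := step_finite h hE
  have aux : Uns F ⊆ Uns E → W F < W E →
      Prod.Lex (· < ·) (· < ·) ((Uns F).ncard, W F) ((Uns E).ncard, W E) := by
    intro h1 h2
    have := Set.ncard_le_ncard h1 (finite_uns hE)
    rcases this.lt_or_eq with h | h
    · exact Prod.Lex.left _ _ h
    · rw [h]; exact Prod.Lex.right _ h2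
  cases h with
  | @decomp f sl tl hm hl =>
    apply aux
    · apply uns_sub
      · rintro e (he | he) hn
        · exact absurd he.1 hn
        · refine ⟨_, hm, ?_, fun x hx => occ_zip he hx⟩
          rintro (h | h)
          · exact h.2 rfl
          · exact wt_zip_lt h rfl
      · intro x t h _
        exact Or.inl ⟨h, by simp⟩
    · have h1 := W_remove hE hm
      have h2 := W_union_le (hE.diff (t := {(Trm.fn f sl, Trm.fn f tl)})) (finite_list (sl.zip tl))
      have h3 := W_list (sl.zip tl)
      have h4 := zip_sum sl tl
      simp only [wE, wt_fn] at h1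
      omega
  | @delete x hm =>
    apply aux
    · apply uns_sub
      · intro e he hn
        exact absurd he.1 hn
      · intro y t h hy
        refine ⟨h, ?_⟩
        intro h
        simp at h
        apply hy
        rw [h.1, h.2]
        exact .var
    · have h1 := W_remove hE hm
      simp only [wE, wt_var] at h1
      omega
  | @flip t x hm hn =>
    apply aux
    · apply uns_sub
      · rintro e (he | he) hne
        · exact absurd he.1 hne
        · rw [Set.mem_singleton_iff] at he; subst he
          refine ⟨_, hm, ?_, fun x hx => hx.symm⟩
          rintro (h | h)
          · exact h.2 rfl
          · simp at h; exact hn _ h.1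
      · intro y u h _
        exact Or.inl ⟨h, by simp; intro h; exact absurd h.symm (hn y)⟩
    · have h1 := W_remove hE hm
      have h2 := W_union_le (hE.diff (t := {(t, Trm.var x)})) (Set.finite_singleton (Trm.var x, t))
      rw [W_single] at h2
      have h3 : 2 ≤ wt t := by
        cases t with
        | var y => exact absurd rfl (hn y)
        | fn f ts => rw [wt_fn]; omega
      simp only [wE, wt_var] at h1 h2
      omega
  | @elim x t hm ho he =>
    exact Prod.Lex.left _ _ (Set.ncard_lt_ncard (uns_elim hm ho he) (finite_uns hE))

theorem step_ind {P : EqSet → Prop}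
    (h : ∀ E : EqSet, E.Finite → (∀ F, MMAStep E F → P F) → P E) (E : EqSet) (hE : E.Finite) :
    P E := by
  have wf : WellFounded (Prod.Lex (fun a b : ℕ => a < b) (fun a b : ℕ => a < b)) :=
    WellFounded.prod_lex wellFounded_lt wellFounded_lt
  have key : ∀ p : ℕ × ℕ, ∀ E : EqSet, E.Finite → ((Uns E).ncard, W E) = p → P E := by
    intro p
    induction p using wf.induction with
    | _ p ih =>
      rintro E hE rfl
      exact h E hE (fun F hF => ih _ (step_lt hE hF) F (step_finite hF hE) rfl)
  exact key _ E hE rfl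

theorem exists_terminal (E : EqSet) (hE : E.Finite) :
    ∃ F, Reachable E F ∧ ∀ F', ¬ MMAStep F F' := by
  refine step_ind (P := fun E => ∃ F, Reachable E F ∧ ∀ F', ¬ MMAStep F F') ?_ E hE
  intro E _ ih
  by_cases h : ∃ F, MMAStep E F
  · obtain ⟨F, hF⟩ := h
    obtain ⟨G, hG, ht⟩ := ih F hF
    exact ⟨G, Relation.ReflTransGen.head hF hG, ht⟩
  · exact ⟨E, .refl, fun F hF => h ⟨F, hF⟩⟩

/-! Solved forms -/

def SolvedForm (S : EqSet) : Prop :=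
  ∀ e ∈ S, ∃ x t, e = (Trm.var x, t) ∧ ¬ Trm.Occurs x t ∧
    ∀ e' ∈ S, e' ≠ (Trm.var x, t) → ¬ OccE x e'

theorem solvedForm_of_terminal {S : EqSet} (hc : ¬ ClashApp S) (ho : ¬ OccApp S)
    (ht : ∀ F, ¬ MMAStep S F) : SolvedForm S := by
  rintro ⟨s, t⟩ he
  cases s with
  | fn f sl =>
    cases t with
    | fn g tl =>
      by_cases h : f ≠ g ∨ sl.length ≠ tl.length
      · exact absurd ⟨f, sl, g, tl, he, h⟩ hc
      · push Not at h
        obtain ⟨rfl, h⟩ := h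
        exact absurd (MMAStep.decomp he h) (ht _)
    | var x => exact absurd (MMAStep.flip he (by simp)) (ht _)
  | var x =>
    by_cases h : t = .var x
    · subst h; exact absurd (MMAStep.delete he) (ht _)
    · have hx : ¬ Trm.Occurs x t := fun hx => ho ⟨x, t, he, hx, h⟩
      refine ⟨x, t, rfl, hx, ?_⟩
      intro e' he' hne hocc
      exact ht _ (MMAStep.elim he hx ⟨e', ⟨he', hne⟩, hocc⟩)

theorem solvedForm_solution {S : EqSet} (hS : SolvedForm S) :
    ∃ σ, Solves σ S ∧ ∀ y, (∀ t, (Trm.var y, t) ∉ S) → σ y = .var y := by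
  classical
  refine ⟨fun x => if h : ∃ t, (Trm.var x, t) ∈ S then h.choose else .var x, ?_, ?_⟩
  · intro e he
    obtain ⟨x, t, rfl, hx, hu⟩ := hS e he
    have hex : ∃ t, (Trm.var x, t) ∈ S := ⟨t, he⟩
    have h1 : hex.choose = t := by
      by_contra hne
      exact hu _ hex.choose_spec (by simpa using hne) (Or.inl .var)
    simp only [subst_var]
    rw [dif_pos hex, h1]
    conv_lhs => rw [← subst_id t]
    apply subst_congr
    intro y hy
    rw [dif_neg]
    rintro ⟨u, hu'⟩
    obtain ⟨y', u', heq, _, h3⟩ := hS _ hu'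
    injection heq with h4 h5
    injection h4 with h4
    subst h4; subst h5
    refine h3 _ he ?_ (Or.inr hy)
    intro h
    injection h with h6 _
    injection h6 with h6
    subst h6; exact hx hy
  · intro y hy
    apply dif_neg
    rintro ⟨t, ht⟩
    exact hy t ht

/-! Parallel simulation -/

def NT (θ : ℕ → Trm) (E : EqSet) : Prop := ∀ e ∈ E, Trm.subst θ e.1 ≠ Trm.subst θ e.2

theorem substE_single {θ : ℕ → Trm} {x : ℕ} {t : Trm} (h : θ x = Trm.subst θ t) (E : EqSet) :
    substE θ (substE (single x t) E) = substE θ E := by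
  unfold substE
  rw [Set.image_image]
  simp only [subst_single_solved h]

theorem NT_of_eq {θ : ℕ → Trm} {E F : EqSet} (h : substE θ F = substE θ E) (hE : NT θ E) :
    NT θ F := by
  intro e he heq
  have : (Trm.subst θ e.1, Trm.subst θ e.2) ∈ substE θ E := by
    rw [← h]; exact ⟨e, he, rfl⟩
  obtain ⟨e', he', h'⟩ := this
  injection h' with h1 h2
  exact hE e' he' (by rw [h1, h2, heq])

theorem diff_union_nt {θ : ℕ → Trm} {A B : EqSet} {e : Trm × Trm} (hA : Solves θ A) (he : e ∈ A)
    (hB : NT θ B) : (A ∪ B) \ {e} = (A \ {e}) ∪ B := by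
  rw [Set.union_diff_distrib]
  congr 1
  apply Set.diff_singleton_eq_self
  intro h
  exact hB e h (hA e he)

theorem par_step {θ : ℕ → Trm} {A A' B : EqSet} (hA : Solves θ A) (hB : NT θ B)
    (h : MMAStep A A') : ∃ B', MMAStep (A ∪ B) (A' ∪ B') ∧ substE θ B' = substE θ B := by
  cases h with
  | @decomp f sl tl hm hl =>
    refine ⟨B, ?_, rfl⟩
    have := MMAStep.decomp (E := A ∪ B) (Or.inl hm) hl
    rw [diff_union_nt hA hm hB, Set.union_right_comm] at this
    exact this
  | @delete x hm =>
    refine ⟨B, ?_, rfl⟩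
    have := MMAStep.delete (E := A ∪ B) (Or.inl hm)
    rw [diff_union_nt hA hm hB] at this
    exact this
  | @flip t x hm hn =>
    refine ⟨B, ?_, rfl⟩
    have := MMAStep.flip (E := A ∪ B) (Or.inl hm) hn
    rw [diff_union_nt hA hm hB, Set.union_right_comm] at this
    exact this
  | @elim x t hm ho he =>
    have hx : θ x = Trm.subst θ t := by simpa [subst_var] using hA _ hm
    refine ⟨substE (single x t) B, ?_, substE_single hx B⟩
    obtain ⟨e, he, h⟩ := he
    have := MMAStep.elim (E := A ∪ B) (Or.inl hm) ho ⟨e, ⟨Or.inl he.1, he.2⟩, h⟩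
    rw [diff_union_nt hA hm hB, substE, Set.image_union, ← Set.union_assoc] at this
    exact this

theorem par_reach {θ : ℕ → Trm} {A A' B : EqSet} (hA : Solves θ A) (hB : NT θ B)
    (h : Reachable A A') : ∃ B', Reachable (A ∪ B) (A' ∪ B') ∧ substE θ B' = substE θ B := by
  induction h with
  | refl => exact ⟨B, .refl, rfl⟩
  | tail h1 h2 ih =>
    obtain ⟨C, h3, h4⟩ := ih
    obtain ⟨D, h5, h6⟩ := par_step ((reach_solves h1 θ).1 hA) (NT_of_eq h4 hB) h2
    exact ⟨D, h3.tail h5, h6.trans h4⟩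

theorem clear_dom {θ : ℕ → Trm} {S : EqSet} (hS : SolvedForm S) (hθ : Solves θ S) (E : EqSet)
    (hE : E.Finite) : ∀ B, E = S ∪ B → NT θ B → ∃ G, Reachable (S ∪ B) (S ∪ G) ∧
      substE θ G = substE θ B ∧ ∀ e ∈ G, ∀ x t, (Trm.var x, t) ∈ S → ¬ OccE x e := by
  refine step_ind (P := fun E => ∀ B, E = S ∪ B → NT θ B → ∃ G, Reachable (S ∪ B) (S ∪ G) ∧
      substE θ G = substE θ B ∧ ∀ e ∈ G, ∀ x t, (Trm.var x, t) ∈ S → ¬ OccE x e) ?_ E hE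
  rintro E hE ih B rfl hB
  by_cases h : ∀ e ∈ B, ∀ x t, (Trm.var x, t) ∈ S → ¬ OccE x e
  · exact ⟨B, .refl, rfl, h⟩
  · push Not at h
    obtain ⟨e, he, x, t, hm, hx⟩ := h
    obtain ⟨x', t', heq, ho, hu⟩ := hS _ hm
    injection heq with h1 h2
    injection h1 with h1
    subst h1; subst h2
    have hxt : θ x = Trm.subst θ t := by simpa [subst_var] using hθ _ hm
    have hne : e ≠ (.var x, t) := by
      rintro rfl
      exact hB _ he (hθ _ hm)
    have hst := MMAStep.elim (E := S ∪ B) (Or.inl hm) ho ⟨e, ⟨Or.inr he, hne⟩, hx⟩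
    have hid : substE (single x t) (S \ {(Trm.var x, t)}) = S \ {(Trm.var x, t)} := by
      unfold substE
      conv_rhs => rw [← Set.image_id (S \ {(Trm.var x, t)})]
      apply Set.image_congr
      rintro e' ⟨h1, h2⟩
      have h3 := hu e' h1 h2
      rw [subst_single_not (fun h => h3 (Or.inl h)), subst_single_not (fun h => h3 (Or.inr h))]
      rfl
    have hset : {(Trm.var x, t)} ∪ substE (single x t) ((S ∪ B) \ {(Trm.var x, t)}) =
        S ∪ substE (single x t) B := by
      rw [diff_union_nt hθ hm hB]
      have : substE (single x t) ((S \ {(Trm.var x, t)}) ∪ B) =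
        substE (single x t) (S \ {(Trm.var x, t)}) ∪ substE (single x t) B := Set.image_union _ _ _
      rw [this, hid, ← Set.union_assoc, Set.union_diff_cancel (by simpa using hm)]
    rw [hset] at hst
    have heq := substE_single hxt B
    obtain ⟨G, hG1, hG2, hG3⟩ := ih _ hst _ rfl (NT_of_eq heq hB)
    exact ⟨G, Relation.ReflTransGen.head hst hG1, hG2.trans heq, hG3⟩

/-! Renaming -/

def RV (θ ρ : ℕ → Trm) (t : Trm) : Prop := Trm.subst ρ (Trm.subst θ t) = t

def RVE (θ ρ : ℕ → Trm) (E : EqSet) : Prop := ∀ e ∈ E, RV θ ρ e.1 ∧ RV θ ρ e.2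

theorem RV_iff {θ ρ : ℕ → Trm} (t : Trm) :
    RV θ ρ t ↔ ∀ x, Trm.Occurs x t → RV θ ρ (.var x) := by
  induction t using trm_ind with
  | hv y => simp [occ_var]
  | hf f ts ih =>
    have : RV θ ρ (.fn f ts) ↔ ∀ t ∈ ts, RV θ ρ t := by
      unfold RV
      rw [subst_fn, subst_fn, List.map_map]
      simp only [Trm.fn.injEq, true_and]
      conv_lhs => rhs; rw [← List.map_id ts]
      rw [List.map_inj_left]
      rfl
    rw [this]
    simp only [occ_fn]
    constructor
    · rintro h x ⟨t, ht, hx⟩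
      exact (ih t ht).1 (h t ht) x hx
    · intro h t ht
      exact (ih t ht).2 (fun x hx => h x ⟨t, ht, hx⟩)

theorem RV_var {θ ρ : ℕ → Trm} {x : ℕ} (h : RV θ ρ (.var x)) :
    ∃ x', θ x = .var x' ∧ ρ x' = .var x := by
  unfold RV at h
  rw [subst_var] at h
  cases hx : θ x with
  | var x' => rw [hx, subst_var] at h; exact ⟨x', rfl, h⟩
  | fn f ts => rw [hx, subst_fn] at h; cases h

theorem subE_diff {θ ρ : ℕ → Trm} {E : EqSet} (hE : RVE θ ρ E) {e : Trm × Trm} (he : e ∈ E) :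
    substE θ (E \ {e}) = substE θ E \ {(Trm.subst θ e.1, Trm.subst θ e.2)} := by
  ext p
  constructor
  · rintro ⟨e', ⟨h1, h2⟩, rfl⟩
    refine ⟨⟨e', h1, rfl⟩, ?_⟩
    intro h
    apply h2
    simp only [Set.mem_singleton_iff, Prod.mk.injEq] at h
    have a := hE e he
    have b := hE e' h1
    refine Prod.ext ?_ ?_
    · rw [← b.1, h.1, a.1]
    · rw [← b.2, h.2, a.2]
  · rintro ⟨⟨e', h1, rfl⟩, h2⟩
    refine ⟨e', ⟨h1, ?_⟩, rfl⟩
    rintro rfl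
    exact h2 rfl

theorem RVE_step {θ ρ : ℕ → Trm} {E F : EqSet} (hE : RVE θ ρ E) (h : MMAStep E F) :
    RVE θ ρ F := by
  cases h with
  | @decomp f sl tl hm hl =>
    rintro e (he | he)
    · exact hE e he.1
    · obtain ⟨a, b⟩ := e
      have h1 := List.of_mem_zip he
      have h2 := hE _ hm
      exact ⟨(RV_iff _).2 fun x hx => (RV_iff _).1 h2.1 x (.fn h1.1 hx),
        (RV_iff _).2 fun x hx => (RV_iff _).1 h2.2 x (.fn h1.2 hx)⟩
  | delete hm => intro e he; exact hE e he.1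
  | flip hm hn =>
    rintro e (he | he)
    · exact hE e he.1
    · rw [Set.mem_singleton_iff] at he; subst he; exact (hE _ hm).symm
  | @elim x t hm ho he =>
    rintro e (he | ⟨e', he', rfl⟩)
    · rw [Set.mem_singleton_iff] at he; subst he; exact hE _ hm
    · have key : ∀ u, RV θ ρ u → RV θ ρ (Trm.subst (single x t) u) := by
        intro u hu
        rw [RV_iff]
        intro y hy
        rcases occ_single hy with h | h
        · exact (RV_iff _).1 hu y h.2
        · exact (RV_iff _).1 (hE _ hm).2 y h.2
      exact ⟨key _ (hE _ he'.1).1, key _ (hE _ he'.1).2⟩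

theorem ren_step {θ ρ : ℕ → Trm} {E F : EqSet} (hE : RVE θ ρ E) (h : MMAStep E F) :
    MMAStep (substE θ E) (substE θ F) := by
  have himg : ∀ {e}, e ∈ E → (Trm.subst θ e.1, Trm.subst θ e.2) ∈ substE θ E :=
    fun {e} he => ⟨e, he, rfl⟩
  cases h with
  | @decomp f sl tl hm hl =>
    have h1 := himg hm
    simp only [subst_fn] at h1
    have := MMAStep.decomp h1 (by simpa using hl)
    convert this using 1
    have hu : ∀ A B : EqSet, substE θ (A ∪ B) = substE θ A ∪ substE θ B :=
      fun A B => Set.image_union _ _ _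
    rw [hu, subE_diff hE hm]
    simp only [subst_fn]
    congr 1
    ext p
    rw [List.zip_map]
    simp [substE, Prod.map]
  | @delete x hm =>
    obtain ⟨x', h1, h2⟩ := RV_var (hE _ hm).1
    have h3 := himg hm
    simp only [subst_var, h1] at h3
    have := MMAStep.delete h3
    rw [subE_diff hE hm]
    simp only [subst_var, h1]
    exact this
  | @flip t x hm hn =>
    obtain ⟨x', h1, h2⟩ := RV_var (hE _ hm).2
    have h3 := himg hm
    simp only [subst_var, h1] at h3
    have := MMAStep.flip h3 (by
      intro y hy
      cases t with
      | var z => exact hn z rfl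
      | fn f ts => rw [subst_fn] at hy; cases hy)
    have hu : ∀ A B : EqSet, substE θ (A ∪ B) = substE θ A ∪ substE θ B :=
      fun A B => Set.image_union _ _ _
    rw [hu, subE_diff hE hm]
    simp only [subst_var, h1]
    convert this using 2
    simp [substE, subst_var, h1]
  | @elim x t hm ho he =>
    obtain ⟨x', h1, h2⟩ := RV_var (hE _ hm).1
    have h3 := himg hm
    simp only [subst_var, h1] at h3
    have hd := subE_diff hE hm
    simp only [subst_var, h1] at hd
    have ho' : ¬ Trm.Occurs x' (Trm.subst θ t) := by
      intro h
      apply ho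
      have h4 : RV θ ρ t := (hE _ hm).2
      rw [← h4, occ_subst]
      exact ⟨x', h, by rw [h2]; exact .var⟩
    have hox : ∀ u, Trm.Occurs x u → Trm.Occurs x' (Trm.subst θ u) := by
      intro u hu
      rw [occ_subst]
      exact ⟨x, hu, by rw [h1]; exact .var⟩
    have he' : ∃ e ∈ substE θ E \ {(Trm.var x', Trm.subst θ t)},
        Trm.Occurs x' e.1 ∨ Trm.Occurs x' e.2 := by
      obtain ⟨e, he, h⟩ := he
      rw [← hd]
      exact ⟨_, ⟨e, he, rfl⟩, h.imp (hox _) (hox _)⟩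
    have := MMAStep.elim h3 ho' he'
    have hu : ∀ A B : EqSet, substE θ (A ∪ B) = substE θ A ∪ substE θ B :=
      fun A B => Set.image_union _ _ _
    rw [← hd] at this
    convert this using 1
    rw [hu]
    congr 1
    · simp [substE, subst_var, h1]
    · have key : ∀ u, RV θ ρ u → Trm.subst θ (Trm.subst (single x t) u) =
          Trm.subst (single x' (Trm.subst θ t)) (Trm.subst θ u) := by
        intro u hu
        rw [subst_comp, subst_comp]
        apply subst_congr
        intro y hy
        obtain ⟨y', h5, h6⟩ := RV_var ((RV_iff _).1 hu y hy)
        by_cases hyx : y = x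
        · subst hyx
          simp [single, h1, subst_var]
        · have : y' ≠ x' := by
            rintro rfl
            rw [h2] at h6
            injection h6 with h6
            exact hyx h6.symm
          simp [single, hyx, h5, subst_var, this]
      unfold substE
      rw [Set.image_image, Set.image_image]
      apply Set.image_congr
      intro e he
      simp only
      rw [key _ (hE e he.1).1, key _ (hE e he.1).2]

theorem ren_reach {θ ρ : ℕ → Trm} {E F : EqSet} (hE : RVE θ ρ E) (h : Reachable E F) :
    RVE θ ρ F ∧ Reachable (substE θ E) (substE θ F) := by
  induction h with
  | refl => exact ⟨hE, .refl⟩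
  | tail _ h ih => exact ⟨RVE_step ih.1 h, ih.2.tail (ren_step ih.1 h)⟩

theorem ren_occ {θ ρ : ℕ → Trm} {E : EqSet} (hE : RVE θ ρ E) (h : OccApp E) :
    OccApp (substE θ E) := by
  obtain ⟨x, t, hm, ho, hne⟩ := h
  obtain ⟨x', h1, h2⟩ := RV_var (hE _ hm).1
  refine ⟨x', Trm.subst θ t, ⟨_, hm, by simp [subst_var, h1]⟩, ?_, ?_⟩
  · rw [occ_subst]
    exact ⟨x, ho, by rw [h1]; exact .var⟩
  · intro h
    apply hne
    have h4 : RV θ ρ t := (hE _ hm).2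
    rw [← h4, h, subst_var, h2]

theorem nsto_ren {θ ρ : ℕ → Trm} {E : EqSet} (hE : RVE θ ρ E) (h : NSTO (substE θ E)) :
    NSTO E := by
  intro F hF ho
  obtain ⟨h1, h2⟩ := ren_reach hE hF
  exact h _ h2 (ren_occ h1 ho)

theorem main_nt (E1 E2 : EqSet) (h1 : E1.Finite) (h2 : E2.Finite)
    (θ : ℕ → Trm) (hn1 : NSTO E1) (hmgu : IsMgu θ E1)
    (hn2 : NSTO (substE θ E2)) (hnt : NT θ E2) :
    (∃ F, Reachable (E1 ∪ E2) F ∧ ClashApp F) ∨ Unifiable (E1 ∪ E2) := by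
  obtain ⟨S, hS, hSt⟩ := exists_terminal E1 h1
  have hθS : Solves θ S := (reach_solves hS θ).1 hmgu.1
  have hSF := solvedForm_of_terminal (fun h => clash_not_solves h θ hθS) (hn1 S hS) hSt
  obtain ⟨B, hB1, hB2⟩ := par_reach hmgu.1 hnt hS
  have hfin := reach_finite hB1 (h1.union h2)
  obtain ⟨G, hG1, hG2, hG3⟩ := clear_dom hSF hθS _ hfin B rfl (NT_of_eq hB2 hnt)
  have hreach : Reachable (E1 ∪ E2) (S ∪ G) := hB1.trans hG1
  have hGE : substE θ G = substE θ E2 := hG2.trans hB2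
  obtain ⟨σ, hσ, hσd⟩ := solvedForm_solution hSF
  obtain ⟨ρ, hρ⟩ := hmgu.2 σ ((reach_solves hS σ).2 hσ)
  have hid : ∀ e ∈ G, ∀ x, OccE x e → σ x = .var x := by
    intro e he x hx
    exact hσd x (fun t ht => hG3 e he x t ht hx)
  have hRV : RVE θ ρ G := by
    intro e he
    have : ∀ x, OccE x e → RV θ ρ (.var x) := by
      intro x hx
      unfold RV
      rw [subst_var, ← hρ x]
      exact hid e he x hx
    exact ⟨(RV_iff _).2 fun x hx => this x (Or.inl hx), (RV_iff _).2 fun x hx => this x (Or.inr hx)⟩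
  have hGN : NSTO G := nsto_ren hRV (by rw [hGE]; exact hn2)
  have hGfin : G.Finite := (reach_finite hreach (h1.union h2)).subset Set.subset_union_right
  obtain ⟨F, hF, hFt⟩ := exists_terminal G hGfin
  by_cases hc : ClashApp F
  · left
    obtain ⟨H, hH, hsub⟩ := reach_mono hF (B := S ∪ G) Set.subset_union_right
    exact ⟨H, hreach.trans hH, clash_mono hc hsub⟩
  · right
    obtain ⟨τ, hτ, _⟩ := solvedForm_solution (solvedForm_of_terminal hc (hGN F hF) hFt)
    have hτG := (reach_solves hF τ).2 hτ
    refine ⟨fun x => Trm.subst τ (σ x), (reach_solves hreach _).2 ?_⟩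
    rintro e (he | he)
    · rw [← subst_comp, ← subst_comp, hσ e he]
    · have hq : ∀ u, (∀ x, Trm.Occurs x u → OccE x e) →
          Trm.subst (fun x => Trm.subst τ (σ x)) u = Trm.subst τ u := by
        intro u hu
        apply subst_congr
        intro x hx
        rw [hid e he x (hu x hx), subst_var]
      rw [hq _ (fun x hx => Or.inl hx), hq _ (fun x hx => Or.inr hx)]
      exact hτG e he

end MMAaux

open MMAaux

/-- Let `E1` and `E2` be finite equation sets.  If `E1` is NSTO, `θ1` is a most
general unifier of `E1`, and the equation set
`E2θ1 = {sθ1 ≐ tθ1 | s ≐ t ∈ E2}` is NSTO, then `E1 ∪ E2` is WNSTO. -/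
theorem stmt10 (E1 E2 : EqSet) (h1 : E1.Finite) (h2 : E2.Finite)
    (θ1 : ℕ → Trm) (hnsto1 : NSTO E1) (hmgu : IsMgu θ1 E1)
    (hnsto2 : NSTO (substE θ1 E2)) :
    WNSTO (E1 ∪ E2) := by
  have hsub : {e ∈ E2 | Trm.subst θ1 e.1 ≠ Trm.subst θ1 e.2} ⊆ E2 := fun e he => he.1
  rcases main_nt E1 {e ∈ E2 | Trm.subst θ1 e.1 ≠ Trm.subst θ1 e.2} h1 (h2.subset hsub) θ1 hnsto1
    hmgu (nsto_mono hnsto2 (Set.image_mono hsub)) (fun e he => he.2) with ⟨F, hF, hc⟩ | ⟨σ, hσ⟩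
  · obtain ⟨H, hH, hs⟩ := reach_mono hF (Set.union_subset_union_right E1 hsub)
    exact ⟨H, hH, Or.inl (clash_mono hc hs)⟩
  · have hall : Solves σ (E1 ∪ E2) := by
      obtain ⟨ρ, hρ⟩ := hmgu.2 σ (fun e he => hσ e (Or.inl he))
      rintro e (he | he)
      · exact hσ e (Or.inl he)
      · by_cases h : Trm.subst θ1 e.1 = Trm.subst θ1 e.2
        · have : σ = fun x => Trm.subst ρ (θ1 x) := funext hρ
          rw [this, ← subst_comp, ← subst_comp, h]
        · exact hσ e (Or.inr ⟨he, h⟩)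
    obtain ⟨T, hT, hTt⟩ := exists_terminal (E1 ∪ E2) (h1.union h2)
    have hs := (reach_solves hT σ).1 hall
    exact ⟨T, hT, Or.inr ⟨fun h => clash_not_solves h σ hs, fun h => occ_not_solves h σ hs, hTt⟩⟩
end
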